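/- arXiv:1102.1501 — 11 statements merged into one kernel-verified Lean document; each statement's English description precedes it below -/
import Mathlib

section
/- Let Λ > 0, H := √(Λ/3), and let ρ̄ > 0 and ς > 0 be real constants. Define a : ℝ → ℝ by a(t) := ( √(ρ̄/(3H²) + 1) · sinh(ςHt/2) + cosh(ςHt/2) )^{2/ς}. Then a(0) = 1, a(t) > 0 for all t ≥ 0, a is differentiable on [0,∞), and for all t ≥ 0 the derivative satisfies a′(t) = a(t) · √( Λ/3 + ρ̄/(3·a(t)^ς) ). -/
/-!
Write `a = u ^ (2/ς)` with `u = c sinh θ + cosh θ`, `θ = ςHt/2`, `c² = ρ̄/(3H²) + 1`, and put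
`v = c cosh θ + sinh θ`. Then `u' = (ςH/2) v`, so `a' = a · H v / u`. Since `a ^ ς = u²` and
`v² - u² = c² - 1 = ρ̄/(3H²)`, the quantity `Λ/3 + ρ̄/(3 a ^ ς)` equals `(H v / u)²`; for `t ≥ 0`
both `u` and `v` are positive, so its square root is `H v / u`.
-/

/-- For Λ > 0, H := √(Λ/3), ρ̄ > 0, ς > 0, the function
`a(t) := (√(ρ̄/(3H²) + 1)·sinh(ςHt/2) + cosh(ςHt/2))^(2/ς)` satisfies `a(0) = 1`,
is positive on `[0,∞)`, is differentiable on `[0,∞)`, and solves the Friedmann equation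
`a′(t) = a(t)·√(Λ/3 + ρ̄/(3·a(t)^ς))` for all `t ≥ 0`. -/
theorem stmt_0 (Λ ρbar ς : ℝ) (hΛ : 0 < Λ) (hρ : 0 < ρbar) (hς : 0 < ς)
    (H : ℝ) (hH : H = Real.sqrt (Λ / 3))
    (a : ℝ → ℝ)
    (ha : ∀ t : ℝ, a t =
      (Real.sqrt (ρbar / (3 * H ^ 2) + 1) * Real.sinh (ς * H * t / 2) +
        Real.cosh (ς * H * t / 2)) ^ (2 / ς)) :
    a 0 = 1 ∧ (∀ t : ℝ, 0 ≤ t → 0 < a t) ∧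
      DifferentiableOn ℝ a (Set.Ici 0) ∧
      ∀ t : ℝ, 0 ≤ t →
        HasDerivAt a (a t * Real.sqrt (Λ / 3 + ρbar / (3 * a t ^ ς))) t := by
  have hH0 : 0 < H := by rw [hH]; positivity
  have hH2 : H ^ 2 = Λ / 3 := by rw [hH, Real.sq_sqrt (by positivity)]
  set c := Real.sqrt (ρbar / (3 * H ^ 2) + 1) with hc
  have hc0 : 0 < c := by rw [hc]; positivity
  have hc2 : c ^ 2 = ρbar / (3 * H ^ 2) + 1 := by rw [hc, Real.sq_sqrt (by positivity)]
  have hρc : ρbar = 3 * H ^ 2 * (c ^ 2 - 1) := by rw [hc2]; field_simp; ring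
  have hsinh : ∀ t : ℝ, 0 ≤ t → 0 ≤ Real.sinh (ς * H * t / 2) := fun t ht =>
    Real.sinh_nonneg_iff.2 (by positivity)
  have hu : ∀ t : ℝ, 0 ≤ t →
      0 < c * Real.sinh (ς * H * t / 2) + Real.cosh (ς * H * t / 2) := fun t ht =>
    add_pos_of_nonneg_of_pos (mul_nonneg hc0.le (hsinh t ht)) (Real.cosh_pos _)
  have hderiv : ∀ t : ℝ, 0 ≤ t →
      HasDerivAt a (a t * Real.sqrt (Λ / 3 + ρbar / (3 * a t ^ ς))) t := by
    intro t ht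
    have hut := hu t ht
    have hθ : HasDerivAt (fun t : ℝ => ς * H * t / 2) (ς * H / 2) t := by
      simpa using ((hasDerivAt_id t).const_mul (ς * H)).div_const 2
    have hd := ((hθ.sinh.const_mul c).add hθ.cosh).rpow_const (p := 2 / ς) (Or.inl hut.ne')
    have hs := hsinh t ht
    have hch := Real.cosh_pos (ς * H * t / 2)
    have hcs := Real.cosh_sq (ς * H * t / 2)
    have hpow : a t ^ ς =
        (c * Real.sinh (ς * H * t / 2) + Real.cosh (ς * H * t / 2)) ^ 2 := by
      rw [ha, ← Real.rpow_mul hut.le, div_mul_cancel₀ _ hς.ne', Real.rpow_two]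
    rw [hpow, ha t, funext ha]
    simp only [Pi.add_apply] at hd
    rw [Real.rpow_sub_one hut.ne'] at hd
    generalize Real.sinh (ς * H * t / 2) = S at *
    generalize Real.cosh (ς * H * t / 2) = C at *
    have hsqrt : Real.sqrt (Λ / 3 + ρbar / (3 * (c * S + C) ^ 2)) =
        H * (c * C + S) / (c * S + C) := by
      rw [← Real.sqrt_sq (show 0 ≤ H * (c * C + S) / (c * S + C) by positivity)]
      congr 1
      rw [← hH2, hρc]
      field_simp
      linear_combination (1 - c ^ 2) * hcs
    rw [hsqrt]
    convert hd using 1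
    field_simp
  refine ⟨by simp [ha], fun t ht => ?_, fun t ht => ?_, hderiv⟩
  · rw [ha]
    exact Real.rpow_pos_of_pos (hu t ht) _
  · exact (hderiv t ht).differentiableAt.differentiableWithinAt
end

section
/- Let Λ > 0, H := √(Λ/3), and let ρ̄ > 0 and ς > 0 be real constants. Define a : ℝ → ℝ by a(t) := ( √(ρ̄/(3H²) + 1) · sinh(ςHt/2) + cosh(ςHt/2) )^{2/ς}, and set A := ( (1/2)·( √(ρ̄/(3H²) + 1) + 1 ) )^{2/ς}. Then for all t ≥ 0 one has (1/2)^{2/ς} · e^{Ht} ≤ a(t) ≤ A · e^{Ht}. -/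
/-!
With `s = √(ρ̄/(3H²) + 1) ≥ 1` and `x = ςHt/2 ≥ 0`, the base of the power is
`s sinh x + cosh x = (s+1)/2 · eˣ - (s-1)/2 · e⁻ˣ`, hence at most `(s+1)/2 · eˣ`; it is also at least
`sinh x + cosh x = eˣ`. Raising to the power `2/ς` is monotone and turns `eˣ` into `e^{Ht}`.
-/

/-- With Λ > 0, H := √(Λ/3), ρ̄ > 0, ς > 0,
`a(t) := (√(ρ̄/(3H²) + 1)·sinh(ςHt/2) + cosh(ςHt/2))^(2/ς)` and
`A := ((1/2)·(√(ρ̄/(3H²) + 1) + 1))^(2/ς)`, one has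
`(1/2)^(2/ς)·e^{Ht} ≤ a(t) ≤ A·e^{Ht}` for all `t ≥ 0`. -/
theorem stmt_1 (Λ ρbar ς : ℝ) (hΛ : 0 < Λ) (hρ : 0 < ρbar) (hς : 0 < ς)
    (H : ℝ) (hH : H = Real.sqrt (Λ / 3))
    (a : ℝ → ℝ)
    (ha : ∀ t : ℝ, a t =
      (Real.sqrt (ρbar / (3 * H ^ 2) + 1) * Real.sinh (ς * H * t / 2) +
        Real.cosh (ς * H * t / 2)) ^ (2 / ς))
    (A : ℝ)
    (hA : A = ((1 / 2) * (Real.sqrt (ρbar / (3 * H ^ 2) + 1) + 1)) ^ (2 / ς)) :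
    ∀ t : ℝ, 0 ≤ t →
      ((1 : ℝ) / 2) ^ (2 / ς) * Real.exp (H * t) ≤ a t ∧
        a t ≤ A * Real.exp (H * t) := by
  intro t ht
  have hH0 : 0 ≤ H := hH ▸ Real.sqrt_nonneg _
  have hs : 1 ≤ Real.sqrt (ρbar / (3 * H ^ 2) + 1) := by
    rw [Real.one_le_sqrt]
    have : 0 ≤ ρbar / (3 * H ^ 2) := by positivity
    linarith
  rw [ha, hA]
  set s := Real.sqrt (ρbar / (3 * H ^ 2) + 1)
  have hx : 0 ≤ ς * H * t / 2 := by positivity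
  have hexp : Real.exp (H * t) = Real.exp (ς * H * t / 2) ^ (2 / ς) := by
    rw [← Real.exp_mul]
    congr 1
    field_simp
  have hp : 0 ≤ 2 / ς := by positivity
  set x := ς * H * t / 2
  have hE := Real.exp_pos x
  have hF := Real.exp_pos (-x)
  have hsinh : 0 ≤ Real.sinh x := Real.sinh_nonneg_iff.2 hx
  have hlow : Real.exp x ≤ s * Real.sinh x + Real.cosh x := by
    have := Real.sinh_add_cosh x
    nlinarith
  rw [hexp, ← Real.mul_rpow (by norm_num) hE.le, ← Real.mul_rpow (by positivity) hE.le]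
  constructor
  · exact Real.rpow_le_rpow (by positivity) (by linarith) hp
  · refine Real.rpow_le_rpow (by linarith) ?_ hp
    rw [Real.sinh_eq, Real.cosh_eq]
    nlinarith
end

section
/- Let Λ > 0, H := √(Λ/3), and let ρ̄ > 0 and ς > 0 be real constants. Define a : ℝ → ℝ by a(t) := ( √(ρ̄/(3H²) + 1) · sinh(ςHt/2) + cosh(ςHt/2) )^{2/ς}, and set A := ( (1/2)·( √(ρ̄/(3H²) + 1) + 1 ) )^{2/ς}. Then for every integer N ≥ 0 there exists a constant C_N > 0 such that for all t ≥ 0, | e^{−Ht} · (dⁿ/dtⁿ a)(t) − A·Hᴺ | ≤ C_N · e^{−ςHt}, where (dⁿ/dtⁿ a) denotes the N-th derivative of a. -/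
/-!
In the variable `u = e^{-ςHt}` the scale factor is `a(t) = e^{Ht} g(u)` with
`g(u) = (p - q u)^{2/ς}`, where `p = (k + 1)/2`, `q = (k - 1)/2` and `k = √(ρ̄/(3H²) + 1) ≥ 1`.
Since `p - q = 1`, the function `g` is smooth on the open set `{u | 0 < p - q u} ⊇ [0, 1]`.
Differentiating, `d/dt (e^{Ht} g(u)) = e^{Ht} (H g(u) - ςH u g'(u))`, so every derivative of `a`
has the form `e^{Ht} g_N(u)` with `g_N` smooth on the same set and `g_N(0) = A Hᴺ`
(`exists_profile`). The estimate is the Lipschitz bound `|g_N(u) - g_N(0)| ≤ C u` on `[0, 1]`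
(`exists_lipschitz_at_zero`).
-/

open scoped ContDiff in
/-- If `a(t) = e^{Ht} g(e^{-ct})` with `g` smooth on an open set `U`, then each derivative of `a`
has this form too, and each differentiation multiplies the value of the profile at `0` by `H`. -/
theorem exists_profile (H c : ℝ) (U : Set ℝ) (hU : IsOpen U)
    (a g : ℝ → ℝ) (hg : ContDiffOn ℝ ∞ g U)
    (ha : ∀ t, Real.exp (-(c * t)) ∈ U → a t = Real.exp (H * t) * g (Real.exp (-(c * t))))
    (N : ℕ) :
    ∃ gN : ℝ → ℝ, ContDiffOn ℝ ∞ gN U ∧ gN 0 = g 0 * H ^ N ∧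
      ∀ t, Real.exp (-(c * t)) ∈ U →
        iteratedDeriv N a t = Real.exp (H * t) * gN (Real.exp (-(c * t))) := by
  induction N with
  | zero => exact ⟨g, hg, by simp, by simpa using ha⟩
  | succ n ih =>
    obtain ⟨f, hf, hf0, hfa⟩ := ih
    have hdf : ContDiffOn ℝ ∞ (deriv f) U := ((contDiffOn_infty_iff_deriv_of_isOpen hU).1 hf).2
    refine ⟨fun u => H * f u - c * u * deriv f u, ?_, ?_, ?_⟩
    · exact (contDiffOn_const.mul hf).sub ((contDiffOn_const.mul contDiffOn_id).mul hdf)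
    · simp only [hf0]; ring
    · intro t ht
      have hev : iteratedDeriv n a =ᶠ[nhds t]
          fun s => Real.exp (H * s) * f (Real.exp (-(c * s))) := by
        have hc : Continuous fun s : ℝ => Real.exp (-(c * s)) := by fun_prop
        filter_upwards [(hU.preimage hc).mem_nhds ht] with s hs using hfa s hs
      have hfd : HasDerivAt f (deriv f (Real.exp (-(c * t)))) (Real.exp (-(c * t))) :=
        ((hf.differentiableOn (by simp)).differentiableAt (hU.mem_nhds ht)).hasDerivAt
      have he : HasDerivAt (fun s : ℝ => Real.exp (-(c * s)))
          (Real.exp (-(c * t)) * -(c * 1)) t := ((hasDerivAt_id t).const_mul c).neg.exp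
      have hH : HasDerivAt (fun s : ℝ => Real.exp (H * s)) (Real.exp (H * t) * (H * 1)) t :=
        ((hasDerivAt_id t).const_mul H).exp
      have hcomp : HasDerivAt (fun s : ℝ => f (Real.exp (-(c * s))))
          (deriv f (Real.exp (-(c * t))) * (Real.exp (-(c * t)) * -(c * 1))) t :=
        HasDerivAt.comp t hfd he
      rw [iteratedDeriv_succ, hev.deriv_eq, (hH.fun_mul hcomp).deriv]
      ring

open scoped ContDiff in
theorem exists_lipschitz_at_zero (U : Set ℝ) (hU : IsOpen U) (hI : Set.Icc (0 : ℝ) 1 ⊆ U)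
    (g : ℝ → ℝ) (hg : ContDiffOn ℝ ∞ g U) :
    ∃ C : ℝ, 0 < C ∧ ∀ u ∈ Set.Icc (0 : ℝ) 1, |g u - g 0| ≤ C * u := by
  have hdg : ContinuousOn (deriv g) (Set.Icc 0 1) :=
    ((contDiffOn_infty_iff_deriv_of_isOpen hU).1 hg).2.continuousOn.mono hI
  obtain ⟨C, hC⟩ := isCompact_Icc.exists_bound_of_continuousOn hdg
  refine ⟨max C 1, by positivity, fun u hu => ?_⟩
  have h := (convex_Icc (0 : ℝ) 1).norm_image_sub_le_of_norm_deriv_le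
    (f := g) (C := max C 1)
    (fun x hx => (hg.differentiableOn (by simp)).differentiableAt (hU.mem_nhds (hI hx)))
    (fun x hx => (hC x hx).trans (le_max_left _ _)) (Set.left_mem_Icc.2 zero_le_one) hu
  simpa [abs_of_nonneg hu.1] using h

/-- With Λ > 0, H := √(Λ/3), ρ̄ > 0, ς > 0,
`a(t) := (√(ρ̄/(3H²) + 1)·sinh(ςHt/2) + cosh(ςHt/2))^(2/ς)` and
`A := ((1/2)·(√(ρ̄/(3H²) + 1) + 1))^(2/ς)`, for every integer N ≥ 0 there exists
C_N > 0 such that for all t ≥ 0, `|e^{−Ht}·(dⁿ/dtⁿ a)(t) − A·Hᴺ| ≤ C_N·e^{−ςHt}`. -/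
theorem stmt_2 (Λ ρbar ς : ℝ) (hΛ : 0 < Λ) (hρ : 0 < ρbar) (hς : 0 < ς)
    (H : ℝ) (hH : H = Real.sqrt (Λ / 3))
    (a : ℝ → ℝ)
    (ha : ∀ t : ℝ, a t =
      (Real.sqrt (ρbar / (3 * H ^ 2) + 1) * Real.sinh (ς * H * t / 2) +
        Real.cosh (ς * H * t / 2)) ^ (2 / ς))
    (A : ℝ)
    (hA : A = ((1 / 2) * (Real.sqrt (ρbar / (3 * H ^ 2) + 1) + 1)) ^ (2 / ς)) :
    ∀ N : ℕ, ∃ C : ℝ, 0 < C ∧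
      ∀ t : ℝ, 0 ≤ t →
        |Real.exp (-(H * t)) * iteratedDeriv N a t - A * H ^ N| ≤
          C * Real.exp (-(ς * H * t)) := by
  intro N
  have hHpos : 0 < H := by rw [hH]; positivity
  set k := Real.sqrt (ρbar / (3 * H ^ 2) + 1) with hk
  have hk1 : 1 ≤ k := by
    rw [hk, Real.one_le_sqrt]
    have : 0 < ρbar / (3 * H ^ 2) := by positivity
    linarith
  let U : Set ℝ := {u | 0 < (k + 1) / 2 - (k - 1) / 2 * u}
  have hU : IsOpen U := isOpen_lt continuous_const (by fun_prop)
  have hI : Set.Icc (0 : ℝ) 1 ⊆ U := by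
    intro u hu
    change 0 < (k + 1) / 2 - (k - 1) / 2 * u
    nlinarith [hu.1, hu.2]
  have hg : ContDiffOn ℝ (⊤ : ℕ∞)
      (fun u : ℝ => ((k + 1) / 2 - (k - 1) / 2 * u) ^ (2 / ς)) U :=
    ContDiffOn.rpow_const_of_ne (by fun_prop) (fun u hu => ne_of_gt hu)
  have hform : ∀ t, Real.exp (-(ς * H * t)) ∈ U → a t = Real.exp (H * t) *
      ((k + 1) / 2 - (k - 1) / 2 * Real.exp (-(ς * H * t))) ^ (2 / ς) := by
    intro t ht
    have hbase : k * Real.sinh (ς * H * t / 2) + Real.cosh (ς * H * t / 2) =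
        Real.exp (ς * H * t / 2) *
          ((k + 1) / 2 - (k - 1) / 2 * Real.exp (-(ς * H * t))) := by
      have h2 : Real.exp (-(ς * H * t / 2)) =
          Real.exp (ς * H * t / 2) * Real.exp (-(ς * H * t)) := by
        rw [← Real.exp_add]; congr 1; ring
      rw [Real.sinh_eq, Real.cosh_eq, h2]
      ring
    rw [ha, hbase, Real.mul_rpow (Real.exp_pos _).le (le_of_lt ht), ← Real.exp_mul]
    congr 2
    field_simp
  obtain ⟨g, hgs, hg0, hga⟩ :=
    exists_profile H (ς * H) U hU a _ hg hform N
  obtain ⟨C, hC, hb⟩ := exists_lipschitz_at_zero U hU hI g hgs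
  have hA0 : A * H ^ N = g 0 := by
    rw [hg0, hA]
    congr 2
    ring
  refine ⟨C, hC, fun t ht => ?_⟩
  have hu : Real.exp (-(ς * H * t)) ∈ Set.Icc (0 : ℝ) 1 :=
    ⟨(Real.exp_pos _).le, Real.exp_le_one_iff.2 (neg_nonpos.2 (by positivity))⟩
  rw [hga t (hI hu), ← mul_assoc, ← Real.exp_add, neg_add_cancel, Real.exp_zero, one_mul, hA0]
  exact hb _ hu
end

section
/- Let Λ > 0, H := √(Λ/3), and let ρ̄ > 0 and ς > 0 be real constants. Define a : ℝ → ℝ by a(t) := ( √(ρ̄/(3H²) + 1) · sinh(ςHt/2) + cosh(ςHt/2) )^{2/ς}, and define ω(t) := a′(t)/a(t). Then for all t ≥ 0 one has H ≤ ω(t) ≤ √( H² + ρ̄/3 ). -/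
/-!
Put `k = √(ρ̄/(3H²) + 1) ≥ 1`, `s = sinh (ςHt/2)` and `c = cosh (ςHt/2)`. Logarithmic
differentiation of `a = (k s + c)^(2/ς)` cancels the factor `ς/2` and gives
`ω = H (k c + s) / (k s + c)`. Since `√(H² + ρ̄/3) = H k`, the bounds reduce to
`(k - 1) (c - s) ≥ 0` and `(k² - 1) s ≥ 0`, both clear for `t ≥ 0`.
-/

/-- Logarithmic derivative of `(k sinh (ςHt/2) + cosh (ςHt/2))^(2/ς)` wherever the base is
positive. -/
lemma logDeriv_scale_factor (k H ς t : ℝ) (hς : 0 < ς)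
    (hpos : 0 < k * Real.sinh (ς * H * t / 2) + Real.cosh (ς * H * t / 2)) :
    deriv (fun t : ℝ =>
        (k * Real.sinh (ς * H * t / 2) + Real.cosh (ς * H * t / 2)) ^ (2 / ς)) t /
      (k * Real.sinh (ς * H * t / 2) + Real.cosh (ς * H * t / 2)) ^ (2 / ς) =
    H * (k * Real.cosh (ς * H * t / 2) + Real.sinh (ς * H * t / 2)) /
      (k * Real.sinh (ς * H * t / 2) + Real.cosh (ς * H * t / 2)) := by
  have hlin : HasDerivAt (fun t : ℝ => ς * H * t / 2) (ς * H / 2) t := by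
    simpa using ((hasDerivAt_id t).const_mul (ς * H)).div_const 2
  have hbase := (hlin.sinh.const_mul k).add hlin.cosh
  have hpow := hbase.rpow_const (p := 2 / ς) (Or.inl hpos.ne')
  simp only [Pi.add_apply] at hpow
  rw [hpow.deriv, Real.rpow_sub_one hpos.ne']
  have hpow_ne := (Real.rpow_pos_of_pos hpos (2 / ς)).ne'
  have hbase_ne := hpos.ne'
  generalize (k * Real.sinh (ς * H * t / 2) + Real.cosh (ς * H * t / 2)) ^ (2 / ς) = P at *
  generalize Real.sinh (ς * H * t / 2) = s at *
  generalize Real.cosh (ς * H * t / 2) = c at *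
  field_simp

/-- With Λ > 0, H := √(Λ/3), ρ̄ > 0, ς > 0,
`a(t) := (√(ρ̄/(3H²) + 1)·sinh(ςHt/2) + cosh(ςHt/2))^(2/ς)` and `ω(t) := a′(t)/a(t)`,
one has `H ≤ ω(t) ≤ √(H² + ρ̄/3)` for all `t ≥ 0`. -/
theorem stmt_3 (Λ ρbar ς : ℝ) (hΛ : 0 < Λ) (hρ : 0 < ρbar) (hς : 0 < ς)
    (H : ℝ) (hH : H = Real.sqrt (Λ / 3))
    (a : ℝ → ℝ)
    (ha : ∀ t : ℝ, a t =
      (Real.sqrt (ρbar / (3 * H ^ 2) + 1) * Real.sinh (ς * H * t / 2) +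
        Real.cosh (ς * H * t / 2)) ^ (2 / ς))
    (ω : ℝ → ℝ) (hω : ∀ t : ℝ, ω t = deriv a t / a t) :
    ∀ t : ℝ, 0 ≤ t → H ≤ ω t ∧ ω t ≤ Real.sqrt (H ^ 2 + ρbar / 3) := by
  intro t ht
  have hHpos : 0 < H := by rw [hH]; positivity
  have hsqrt : Real.sqrt (H ^ 2 + ρbar / 3) = H * Real.sqrt (ρbar / (3 * H ^ 2) + 1) := by
    have hfac : H ^ 2 + ρbar / 3 = H ^ 2 * (ρbar / (3 * H ^ 2) + 1) := by
      field_simp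
      ring
    rw [hfac, Real.sqrt_mul (sq_nonneg H), Real.sqrt_sq hHpos.le]
  have hk : 1 ≤ Real.sqrt (ρbar / (3 * H ^ 2) + 1) := by
    rw [Real.one_le_sqrt]
    have : 0 < ρbar / (3 * H ^ 2) := by positivity
    linarith
  rw [hsqrt, hω, funext ha]
  generalize Real.sqrt (ρbar / (3 * H ^ 2) + 1) = k at *
  have hs : 0 ≤ Real.sinh (ς * H * t / 2) := Real.sinh_nonneg_iff.mpr (by positivity)
  have hsc : Real.sinh (ς * H * t / 2) < Real.cosh (ς * H * t / 2) := Real.sinh_lt_cosh _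
  have hpos : 0 < k * Real.sinh (ς * H * t / 2) + Real.cosh (ς * H * t / 2) := by
    have := mul_nonneg (zero_le_one.trans hk) hs
    linarith
  rw [logDeriv_scale_factor k H ς t hς hpos, le_div_iff₀ hpos, div_le_iff₀ hpos, mul_assoc H k]
  constructor
  · refine mul_le_mul_of_nonneg_left ?_ hHpos.le
    nlinarith [mul_nonneg (sub_nonneg.mpr hk) (sub_nonneg.mpr hsc.le)]
  · refine mul_le_mul_of_nonneg_left ?_ hHpos.le
    have hk2 : 0 ≤ k ^ 2 - 1 := by nlinarith
    nlinarith [mul_nonneg hk2 hs]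
end

section
/- Let Λ > 0, H := √(Λ/3), and let ρ̄ > 0 and ς > 0 be real constants. Define a : ℝ → ℝ by a(t) := ( √(ρ̄/(3H²) + 1) · sinh(ςHt/2) + cosh(ςHt/2) )^{2/ς}, and define ω(t) := a′(t)/a(t). Then for every integer N ≥ 0 there exists a constant C̃_N > 0 such that for all t ≥ 0, | (dⁿ/dtⁿ (ω − H))(t) | ≤ C̃_N · e^{−ςHt}, where (dⁿ/dtⁿ (ω − H)) denotes the N-th derivative of the function t ↦ ω(t) − H. -/
/-!
Write `k = ς H`, `A = √(ρ̄/(3H²) + 1) > 1` and `f t = A sinh (k t / 2) + cosh (k t / 2)`, so that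
`a = f ^ (2/ς)`. On the open set `{f > 0}`, which contains `[0, ∞)`, the logarithmic derivative of
`a` gives
`u := ω - H = H (A - 1) e^{-kt/2} / f`,
and `u` solves the autonomous Riccati equation `u' = u * (-(ς/2) (u + 2H))`. By induction every
derivative of `u` is then `u` times a polynomial in `u` (`iteratedDeriv_eq_mul_eval`). For `t ≥ 0`
one has `f t ≥ e^{kt/2} / 2`, hence `0 ≤ u t ≤ 2H(A - 1) e^{-kt}`. In particular `u` stays in a
compact interval, on which the polynomial factor is bounded, while the factor `u` supplies the
decay.
-/

open Polynomial in
/-- Iterated derivatives of a solution of the autonomous equation `u' = u * P(u)` with `P` a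
polynomial are again of the form `u * R(u)`. -/
lemma iteratedDeriv_eq_mul_eval {U : Set ℝ} (hU : IsOpen U) {u : ℝ → ℝ} (P : ℝ[X])
    (hu : ∀ t ∈ U, HasDerivAt u (u t * P.eval (u t)) t) (N : ℕ) :
    ∃ R : ℝ[X], ∀ t ∈ U, iteratedDeriv N u t = u t * R.eval (u t) := by
  induction N with
  | zero => exact ⟨1, fun t _ => by simp⟩
  | succ n ih =>
    obtain ⟨R, hR⟩ := ih
    refine ⟨(R + X * derivative R) * P, fun t ht => ?_⟩
    have hev : iteratedDeriv n u =ᶠ[nhds t] fun s => u s * R.eval (u s) :=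
      Filter.eventually_of_mem (hU.mem_nhds ht) hR
    have hd := (hu t ht).mul ((R.hasDerivAt (u t)).comp t (hu t ht))
    rw [iteratedDeriv_succ, hev.deriv_eq]
    refine (HasDerivAt.deriv hd).trans ?_
    simp
    ring


/-- With Λ > 0, H := √(Λ/3), ρ̄ > 0, ς > 0,
`a(t) := (√(ρ̄/(3H²) + 1)·sinh(ςHt/2) + cosh(ςHt/2))^(2/ς)` and `ω(t) := a′(t)/a(t)`,
for every integer N ≥ 0 there exists C̃_N > 0 such that for all t ≥ 0,
`|(dⁿ/dtⁿ (ω − H))(t)| ≤ C̃_N·e^{−ςHt}`. -/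
theorem stmt_4 (Λ ρbar ς : ℝ) (hΛ : 0 < Λ) (hρ : 0 < ρbar) (hς : 0 < ς)
    (H : ℝ) (hH : H = Real.sqrt (Λ / 3))
    (a : ℝ → ℝ)
    (ha : ∀ t : ℝ, a t =
      (Real.sqrt (ρbar / (3 * H ^ 2) + 1) * Real.sinh (ς * H * t / 2) +
        Real.cosh (ς * H * t / 2)) ^ (2 / ς))
    (ω : ℝ → ℝ) (hω : ∀ t : ℝ, ω t = deriv a t / a t) :
    ∀ N : ℕ, ∃ C : ℝ, 0 < C ∧
      ∀ t : ℝ, 0 ≤ t →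
        |iteratedDeriv N (fun s => ω s - H) t| ≤ C * Real.exp (-(ς * H * t)) := by
  intro N
  have hHpos : 0 < H := by rw [hH]; positivity
  set A := Real.sqrt (ρbar / (3 * H ^ 2) + 1) with hA
  have hA1 : 1 < A := by
    rw [hA, Real.lt_sqrt zero_le_one]
    have : 0 < ρbar / (3 * H ^ 2) := by positivity
    linarith
  let f : ℝ → ℝ := fun t => A * Real.sinh (ς * H * t / 2) + Real.cosh (ς * H * t / 2)
  let g : ℝ → ℝ := fun t => A * Real.cosh (ς * H * t / 2) + Real.sinh (ς * H * t / 2)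
  have hlin : ∀ t : ℝ, HasDerivAt (fun s : ℝ => ς * H * s / 2) (ς * H / 2) t := fun t => by
    simpa using ((hasDerivAt_id t).const_mul (ς * H)).div_const 2
  have hf : ∀ t, HasDerivAt f (ς * H / 2 * g t) t := fun t => by
    refine HasDerivAt.congr_deriv (((hlin t).sinh.const_mul A).add (hlin t).cosh) ?_
    simp only [g]; ring
  have hg : ∀ t, HasDerivAt g (ς * H / 2 * f t) t := fun t => by
    refine HasDerivAt.congr_deriv (((hlin t).cosh.const_mul A).add (hlin t).sinh) ?_
    simp only [f]; ring
  have hfc : Continuous f := continuous_iff_continuousAt.2 fun t => (hf t).continuousAt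
  have hUo : IsOpen {t | 0 < f t} := isOpen_lt continuous_const hfc
  have hω' : ∀ t ∈ {t | 0 < f t}, ω t - H = H * (g t / f t) - H := by
    intro t ht
    have ht0 : 0 < f t := ht
    have haf : a = fun s => f s ^ (2 / ς) := funext ha
    have hd : HasDerivAt a (ς * H / 2 * g t * (2 / ς) * f t ^ (2 / ς - 1)) t := by
      rw [haf]
      exact (hf t).rpow_const (Or.inl ht0.ne')
    have hp : 0 < f t ^ (2 / ς) := Real.rpow_pos_of_pos ht0 _
    rw [hω, hd.deriv, haf, Real.rpow_sub_one ht0.ne']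
    field_simp
  have hu : ∀ t ∈ {t | 0 < f t}, HasDerivAt (fun s => ω s - H)
      ((ω t - H) * (Polynomial.C (-(ς / 2)) * (Polynomial.X + Polynomial.C (2 * H))).eval
        (ω t - H)) t := by
    intro t ht
    have ht0 : 0 < f t := ht
    have hev : (fun s => ω s - H) =ᶠ[nhds t] fun s => H * (g s / f s) - H :=
      Filter.eventually_of_mem (hUo.mem_nhds ht) hω'
    refine HasDerivAt.congr_of_eventuallyEq ?_ hev
    refine HasDerivAt.congr_deriv ((((hg t).div (hf t) ht0.ne').const_mul H).sub_const H) ?_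
    rw [hω' t ht]
    simp
    field_simp
    ring
  obtain ⟨R, hR⟩ := iteratedDeriv_eq_mul_eval hUo _ hu N
  obtain ⟨M, hM⟩ := (isCompact_Icc (a := (0 : ℝ)) (b := 2 * H * (A - 1))).exists_bound_of_continuousOn
    R.continuous.continuousOn
  have hKpos : 0 < 2 * H * (A - 1) := by
    have : 0 < A - 1 := by linarith
    positivity
  have hM0 : 0 ≤ M := (norm_nonneg _).trans (hM 0 ⟨le_rfl, hKpos.le⟩)
  refine ⟨2 * H * (A - 1) * (M + 1), by positivity, fun t ht => ?_⟩
  have hx : 0 ≤ ς * H * t / 2 := by positivity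
  have hs : 0 ≤ Real.sinh (ς * H * t / 2) := Real.sinh_nonneg_iff.2 hx
  have hflow : Real.exp (ς * H * t / 2) / 2 ≤ f t := by
    have h1 : Real.exp (ς * H * t / 2) / 2 ≤ Real.cosh (ς * H * t / 2) := by
      rw [Real.cosh_eq]
      have := Real.exp_pos (-(ς * H * t / 2))
      linarith
    have h2 : 0 ≤ A * Real.sinh (ς * H * t / 2) := by positivity
    simp only [f]; linarith
  have hepos := Real.exp_pos (ς * H * t / 2)
  have hft : 0 < f t := by linarith
  have hgf : g t - f t = (A - 1) * Real.exp (-(ς * H * t / 2)) := by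
    rw [← Real.cosh_sub_sinh]; simp only [f, g]; ring
  have hueq : ω t - H = H * (A - 1) * Real.exp (-(ς * H * t / 2)) / f t := by
    rw [hω' t hft, mul_assoc, ← hgf]
    field_simp
  have hA0 : 0 < A - 1 := by linarith
  have hu0 : 0 ≤ ω t - H := by rw [hueq]; positivity
  have hule : ω t - H ≤ 2 * H * (A - 1) * Real.exp (-(ς * H * t)) := by
    rw [hueq, div_le_iff₀ hft]
    have hexp : Real.exp (-(ς * H * t / 2)) =
        Real.exp (-(ς * H * t)) * Real.exp (ς * H * t / 2) := by
      rw [← Real.exp_add]; congr 1; ring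
    calc H * (A - 1) * Real.exp (-(ς * H * t / 2))
        = 2 * H * (A - 1) * Real.exp (-(ς * H * t)) * (Real.exp (ς * H * t / 2) / 2) := by
          rw [hexp]; ring
      _ ≤ _ := by gcongr
  have hexp1 : Real.exp (-(ς * H * t)) ≤ 1 := Real.exp_le_one_iff.2 (by linarith)
  have huK : ω t - H ≤ 2 * H * (A - 1) :=
    hule.trans (mul_le_of_le_one_right hKpos.le hexp1)
  have hRb : |R.eval (ω t - H)| ≤ M + 1 := (hM _ ⟨hu0, huK⟩).trans (by linarith)
  rw [hR t hft, abs_mul, abs_of_nonneg hu0]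
  calc (ω t - H) * |R.eval (ω t - H)|
      ≤ 2 * H * (A - 1) * Real.exp (-(ς * H * t)) * (M + 1) := by gcongr
    _ = _ := by ring
end

section
/- Let g be a symmetric 4×4 real matrix with entries g_{μν}, μ,ν ∈ {0,1,2,3}, such that g₀₀ < 0 and the 3×3 spatial block g_♭ with entries (g_♭)_{jk} = g_{jk}, j,k ∈ {1,2,3}, is positive definite. Set d² := Σ_{a,b=1}^{3} (g_♭⁻¹)^{ab} g_{0a} g_{0b}. Then g is invertible and, writing g^{μν} for the entries of g⁻¹ and g^# for the 3×3 matrix with entries (g^#)^{jk} = g^{jk}, one has for every X = (X₁,X₂,X₃) ∈ ℝ³: (g₀₀/(g₀₀ − d²)) · Σ_{a,b} (g_♭⁻¹)^{ab} X_a X_b ≤ Σ_{a,b} (g^#)^{ab} X_a X_b ≤ Σ_{a,b} (g_♭⁻¹)^{ab} X_a X_b; in particular, g^# is positive definite. -/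
/-!
Write `v` for the covector `g₀ₐ`, `M = g_♭⁻¹`, `w = M v` and `s = g₀₀ - d²`, where `d² = v ⬝ w ≥ 0`,
so that `s < 0`. By Schur complements `g` has the inverse with entries `1/s`, `-wₐ/s` and
`M_{ab} + wₐ w_b / s` (`mul_blockInv`). Hence `g^#(X, X) = M(X, X) + (X ⬝ w)² / s`. The upper bound
is the sign of `s`; the lower bound is the Cauchy–Schwarz inequality
`(X ⬝ w)² = M(X, v)² ≤ d² M(X, X)` for the inner product `M` (`cauchy_schwarz_posDef`), because
`1 + d²/s = g₀₀/s`. This factor is positive, so `g^#` inherits positive definiteness from `M`.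
-/

open Matrix

lemma sum_sum_eq_dotProduct {n : Type*} [Fintype n] (A : Matrix n n ℝ) (X Y : n → ℝ) :
    ∑ a, ∑ b, A a b * X a * Y b = X ⬝ᵥ A *ᵥ Y := by
  simp only [dotProduct, mulVec, Finset.mul_sum]
  exact Finset.sum_congr rfl fun a _ => Finset.sum_congr rfl fun b _ => by ring

lemma dotProduct_mulVec_symm {n : Type*} [Fintype n] {A : Matrix n n ℝ} (hA : Aᵀ = A)
    (X Y : n → ℝ) : X ⬝ᵥ A *ᵥ Y = Y ⬝ᵥ A *ᵥ X := by
  rw [dotProduct_mulVec, ← mulVec_transpose, hA, dotProduct_comm]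

lemma cauchy_schwarz_posDef {n : Type*} [Fintype n] {A : Matrix n n ℝ} (hA : A.PosDef)
    (X Y : n → ℝ) : (X ⬝ᵥ A *ᵥ Y) ^ 2 ≤ (Y ⬝ᵥ A *ᵥ Y) * (X ⬝ᵥ A *ᵥ X) := by
  have hsym : Aᵀ = A := by simpa using hA.isHermitian.eq
  -- The quadratic polynomial `t ↦ A(X + tY, X + tY)` is nonnegative.
  have h : ∀ t : ℝ, 0 ≤ (Y ⬝ᵥ A *ᵥ Y) * (t * t) + (2 * (X ⬝ᵥ A *ᵥ Y)) * t + X ⬝ᵥ A *ᵥ X := by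
    intro t
    have h0 : 0 ≤ (X + t • Y) ⬝ᵥ A *ᵥ (X + t • Y) := by
      simpa using hA.posSemidef.dotProduct_mulVec_nonneg (X + t • Y)
    simp only [mulVec_add, mulVec_smul, dotProduct_add, add_dotProduct, smul_dotProduct,
      dotProduct_smul, smul_eq_mul, dotProduct_mulVec_symm hsym Y X] at h0
    linarith
  have := discrim_le_zero h
  unfold discrim at this
  linarith

/-- The block matrix with entries `1/s`, `-wₐ/s`, `M_{ab} + wₐ w_b / s`; the inverse of `g` by
Schur complements. -/
noncomputable def blockInv (M : Matrix (Fin 3) (Fin 3) ℝ) (w : Fin 3 → ℝ) (s : ℝ) :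
    Matrix (Fin 4) (Fin 4) ℝ :=
  Matrix.of (Fin.cons (Fin.cons (1 / s) fun b => -w b / s)
    fun a => Fin.cons (-w a / s) fun b => M a b + w a * w b / s)

lemma mul_blockInv (g : Matrix (Fin 4) (Fin 4) ℝ) (hsymm : g.IsSymm)
    (A M : Matrix (Fin 3) (Fin 3) ℝ) (hA : ∀ j k : Fin 3, A j k = g j.succ k.succ)
    (hAM : A * M = 1) (hM : Mᵀ = M) (v w : Fin 3 → ℝ) (hv : ∀ a, v a = g 0 a.succ)
    (hw : w = M *ᵥ v) (s : ℝ) (hs : s = g 0 0 - v ⬝ᵥ w) (hs0 : s ≠ 0) :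
    g * blockInv M w s = 1 := by
  have hv' : ∀ a, g a.succ 0 = v a := fun a => by rw [hv, hsymm.apply]
  have hAw : ∀ a, ∑ c, A a c * w c = v a := fun a => by
    have : A *ᵥ w = v := by rw [hw, mulVec_mulVec, hAM, one_mulVec]
    exact congrFun this a
  have hvM : ∀ b, ∑ c, v c * M c b = w b := fun b => by
    have : v ᵥ* M = w := by rw [hw, ← mulVec_transpose, hM]
    exact congrFun this b
  have hAM' : ∀ a b, ∑ c, A a c * M c b = (1 : Matrix (Fin 3) (Fin 3) ℝ) a b := fun a b => by
    rw [← hAM, mul_apply]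
  have hvw : ∑ c, v c * w c = g 0 0 - s := by
    rw [hs, dotProduct]; ring
  ext i j
  rw [mul_apply, Fin.sum_univ_succ]
  refine Fin.cases ?_ (fun a => ?_) i <;> refine Fin.cases ?_ (fun b => ?_) j <;>
    simp only [blockInv, of_apply, Fin.cons_zero, Fin.cons_succ, ← hv, hv', ← hA]
  · have : ∑ c, v c * (-w c / s) = -(∑ c, v c * w c) / s := by
      rw [← Finset.sum_neg_distrib, Finset.sum_div]
      exact Finset.sum_congr rfl fun c _ => by ring
    rw [this, hvw, one_apply_eq]
    field_simp
    ring
  · have : ∑ c, v c * (M c b + w c * w b / s) = ∑ c, v c * M c b + (∑ c, v c * w c) * w b / s := by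
      rw [Finset.sum_mul, Finset.sum_div, ← Finset.sum_add_distrib]
      exact Finset.sum_congr rfl fun c _ => by ring
    rw [this, hvw, hvM, one_apply_ne (Fin.succ_ne_zero b).symm]
    field_simp
    ring
  · have : ∑ c, A a c * (-w c / s) = -(∑ c, A a c * w c) / s := by
      rw [← Finset.sum_neg_distrib, Finset.sum_div]
      exact Finset.sum_congr rfl fun c _ => by ring
    rw [this, hAw, one_apply_ne (Fin.succ_ne_zero a)]
    ring
  · have : ∑ c, A a c * (M c b + w c * w b / s)
        = ∑ c, A a c * M c b + (∑ c, A a c * w c) * w b / s := by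
      rw [Finset.sum_mul, Finset.sum_div, ← Finset.sum_add_distrib]
      exact Finset.sum_congr rfl fun c _ => by ring
    rw [this, hAw, hAM']
    simp only [one_apply, Fin.succ_inj]
    ring

/-- If g is a symmetric 4×4 real matrix with g₀₀ < 0 and positive definite
spatial block g_♭, and d² := Σ (g_♭⁻¹)^{ab} g_{0a} g_{0b}, then g is invertible and for
all X ∈ ℝ³:
(g₀₀/(g₀₀ − d²))·Σ (g_♭⁻¹)^{ab} X_a X_b ≤ Σ (g^#)^{ab} X_a X_b ≤ Σ (g_♭⁻¹)^{ab} X_a X_b,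
where (g^#)^{jk} := g^{jk}; in particular g^# is positive definite. -/
theorem stmt_7 (g : Matrix (Fin 4) (Fin 4) ℝ) (hsymm : g.IsSymm)
    (h00 : g 0 0 < 0)
    (gf : Matrix (Fin 3) (Fin 3) ℝ) (hgf : ∀ j k : Fin 3, gf j k = g j.succ k.succ)
    (hpd : gf.PosDef)
    (d2 : ℝ)
    (hd2 : d2 = ∑ a : Fin 3, ∑ b : Fin 3, gf⁻¹ a b * g 0 a.succ * g 0 b.succ) :
    IsUnit g.det ∧
      (∀ X : Fin 3 → ℝ,
        g 0 0 / (g 0 0 - d2) * ∑ a : Fin 3, ∑ b : Fin 3, gf⁻¹ a b * X a * X b ≤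
            ∑ a : Fin 3, ∑ b : Fin 3, g⁻¹ a.succ b.succ * X a * X b ∧
          ∑ a : Fin 3, ∑ b : Fin 3, g⁻¹ a.succ b.succ * X a * X b ≤
            ∑ a : Fin 3, ∑ b : Fin 3, gf⁻¹ a b * X a * X b) ∧
      (Matrix.of fun a b : Fin 3 => g⁻¹ a.succ b.succ).PosDef := by
  have hMpd : gf⁻¹.PosDef := hpd.inv
  have hM : (gf⁻¹)ᵀ = gf⁻¹ := by simpa using hMpd.isHermitian.eq
  have hAM : gf * gf⁻¹ = 1 := mul_nonsing_inv _ hpd.det_pos.ne'.isUnit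
  set M := gf⁻¹ with hMdef
  obtain ⟨v, hv⟩ : ∃ v : Fin 3 → ℝ, ∀ a, v a = g 0 a.succ := ⟨_, fun _ => rfl⟩
  simp only [← hv, sum_sum_eq_dotProduct] at hd2
  have hd0 : 0 ≤ d2 := by
    rw [hd2]; simpa using hMpd.posSemidef.dotProduct_mulVec_nonneg v
  have hs : g 0 0 - d2 < 0 := by linarith
  have hmul : g * blockInv M (M *ᵥ v) (g 0 0 - d2) = 1 :=
    mul_blockInv g hsymm gf M hgf hAM hM v _ hv rfl _ (by rw [hd2]) hs.ne
  have hinv : ∀ a b : Fin 3, g⁻¹ a.succ b.succ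
      = M a b + (M *ᵥ v) a * (M *ᵥ v) b / (g 0 0 - d2) := by
    intro a b
    rw [inv_eq_right_inv hmul]
    simp [blockInv]
  have hform : ∀ X : Fin 3 → ℝ, ∑ a : Fin 3, ∑ b : Fin 3, g⁻¹ a.succ b.succ * X a * X b
      = X ⬝ᵥ M *ᵥ X + (X ⬝ᵥ M *ᵥ v) ^ 2 / (g 0 0 - d2) := by
    intro X
    rw [← sum_sum_eq_dotProduct M X X, dotProduct, sq, Finset.sum_mul_sum, Finset.sum_div,
      ← Finset.sum_add_distrib]
    refine Finset.sum_congr rfl fun a _ => ?_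
    rw [Finset.sum_div, ← Finset.sum_add_distrib]
    exact Finset.sum_congr rfl fun b _ => by rw [hinv]; ring
  have hlow : ∀ X : Fin 3 → ℝ, g 0 0 / (g 0 0 - d2) * (X ⬝ᵥ M *ᵥ X)
      ≤ X ⬝ᵥ M *ᵥ X + (X ⬝ᵥ M *ᵥ v) ^ 2 / (g 0 0 - d2) := by
    intro X
    have hcs := cauchy_schwarz_posDef hMpd X v
    rw [← hd2] at hcs
    have h1 : d2 * (X ⬝ᵥ M *ᵥ X) / (g 0 0 - d2) ≤ (X ⬝ᵥ M *ᵥ v) ^ 2 / (g 0 0 - d2) :=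
      div_le_div_of_nonpos_of_le hs.le hcs
    have h2 : g 0 0 / (g 0 0 - d2) * (X ⬝ᵥ M *ᵥ X)
        = X ⬝ᵥ M *ᵥ X + d2 * (X ⬝ᵥ M *ᵥ X) / (g 0 0 - d2) := by
      have := hs.ne
      field_simp
      ring
    linarith
  refine ⟨(isUnit_iff_isUnit_det g).1 (IsUnit.of_mul_eq_one _ hmul), fun X => ?_, ?_⟩
  · rw [hform, sum_sum_eq_dotProduct]
    exact ⟨hlow X, add_le_of_nonpos_right (div_nonpos_of_nonneg_of_nonpos (sq_nonneg _) hs.le)⟩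
  · refine PosDef.of_dotProduct_mulVec_pos ?_ fun X hX => ?_
    · ext a b
      have hMab : M b a = M a b := congrFun (congrFun hM a) b
      simp only [conjTranspose_apply, of_apply, hinv, star_trivial, hMab]
      ring
    · have hpos : 0 < X ⬝ᵥ M *ᵥ X := by simpa using hMpd.dotProduct_mulVec_pos hX
      rw [star_trivial, ← sum_sum_eq_dotProduct]
      simp only [of_apply]
      rw [hform]
      exact (mul_pos (div_pos_of_neg_of_neg h00 hs) hpos).trans_le (hlow X)
end

section
/- There exists a constant η₀ > 0 with the following property. Let Ω ≥ 0, 0 ≤ q < 1, c₁ ≥ 1, and 0 ≤ η ≤ η₀ be real numbers, and let g be a symmetric 4×4 real matrix with entries g_{μν}, μ,ν ∈ {0,1,2,3}, satisfying: (i) |g₀₀ + 1| ≤ η; (ii) c₁⁻¹·Σ_{a}(X^a)² ≤ e^{−2Ω}·Σ_{a,b} g_{ab} X^a X^b ≤ c₁·Σ_{a}(X^a)² for all (X¹,X²,X³) ∈ ℝ³; (iii) Σ_{a=1}^{3} (g_{0a})² ≤ η·c₁⁻¹·e^{2(1−q)Ω}. Then g is invertible and, writing g^{μν} for the entries of g⁻¹,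 one has |g^{00} + 1| ≤ 4η. -/
/-!
Split a vector of `ℝ⁴` as `v = (t, x)` and write `g = [[g₀₀, bᵀ], [b, A]]`. If the spatial part of
`g v` vanishes, i.e. `t b + A x = 0`, then pairing with `x` gives `xᵀ A x = -t p` with `p = b · x`.
The lower bound on `A` and Cauchy–Schwarz turn this into `p² ≤ η (-t p)`, because
`|b|² |x|² ≤ η c₁⁻¹ e^{2Ω} |x|² ≤ η xᵀ A x`; this is `sq_dot_le`.

For `v` in the kernel of `g` one also has `g₀₀ t + p = 0` with `g₀₀ < 0`, which forces `t = 0`, hence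
`xᵀ A x = 0` and `x = 0`; so `g` is invertible. For `v` the zeroth column of `g⁻¹` one has
`g₀₀ t + p = 1` and `t = g⁰⁰`. With `s = -p / t` the inequality says `0 ≤ s ≤ η`, and
`g⁰⁰ = 1 / (g₀₀ - s)` lies within `2η / (1 - η) ≤ 4η` of `-1` once `η ≤ 1/2`; so `η₀ = 1/2` works.
-/

/-- Consequences of `t b + A x = 0` for `v = (t, x)`, written out in components with
`E = e^{-2Ω}` and `p = b · x = ∑ g₀ₐ vₐ`: the coercivity bound on the spatial part of `v`, and
the bound on `p` coming from it by Cauchy–Schwarz. -/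
lemma sq_dot_le {c E η : ℝ} {g : Matrix (Fin 4) (Fin 4) ℝ} (hE : 0 < E) (hη : 0 ≤ η)
    (hg : g.IsSymm)
    (hA : ∀ X : Fin 3 → ℝ, c⁻¹ * ∑ a : Fin 3, X a ^ 2 ≤
      E * ∑ a : Fin 3, ∑ b : Fin 3, g a.succ b.succ * X a * X b)
    (hb : E * ∑ a : Fin 3, g 0 a.succ ^ 2 ≤ η * c⁻¹) (v : Fin 4 → ℝ)
    (h : ∀ a : Fin 3, (g.mulVec v) a.succ = 0) :
    c⁻¹ * ∑ a : Fin 3, v a.succ ^ 2 ≤ E * -(v 0 * ∑ a : Fin 3, g 0 a.succ * v a.succ) ∧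
    (∑ a : Fin 3, g 0 a.succ * v a.succ) ^ 2 ≤
      η * -(v 0 * ∑ a : Fin 3, g 0 a.succ * v a.succ) := by
  set p := ∑ a : Fin 3, g 0 a.succ * v a.succ with hp
  have hQ : ∑ a : Fin 3, ∑ b : Fin 3, g a.succ b.succ * v a.succ * v b.succ = -(v 0 * p) := by
    have key : ∀ a : Fin 3, ∑ b : Fin 3, g a.succ b.succ * v a.succ * v b.succ
        = -(v 0 * (g 0 a.succ * v a.succ)) := by
      intro a
      have ha := h a
      rw [Matrix.mulVec, dotProduct, Fin.sum_univ_succ, hg.apply 0 a.succ] at ha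
      have : ∑ b : Fin 3, g a.succ b.succ * v a.succ * v b.succ
          = v a.succ * ∑ b : Fin 3, g a.succ b.succ * v b.succ := by
        rw [Finset.mul_sum]
        exact Finset.sum_congr rfl fun b _ => by ring
      rw [this]
      linear_combination v a.succ * ha
    rw [Finset.sum_congr rfl fun a _ => key a, Finset.sum_neg_distrib, ← Finset.mul_sum]
  have hx := hA fun a => v a.succ
  rw [hQ] at hx
  refine ⟨hx, ?_⟩
  have hcs : p ^ 2 ≤ (∑ a : Fin 3, g 0 a.succ ^ 2) * ∑ a : Fin 3, v a.succ ^ 2 :=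
    Finset.sum_mul_sq_le_sq_mul_sq _ _ _
  have hS : 0 ≤ ∑ a : Fin 3, v a.succ ^ 2 := Finset.sum_nonneg fun a _ => sq_nonneg _
  refine le_of_mul_le_mul_left ?_ hE
  calc E * p ^ 2 ≤ E * ((∑ a : Fin 3, g 0 a.succ ^ 2) * ∑ a : Fin 3, v a.succ ^ 2) := by gcongr
    _ = (E * ∑ a : Fin 3, g 0 a.succ ^ 2) * ∑ a : Fin 3, v a.succ ^ 2 := by ring
    _ ≤ (η * c⁻¹) * ∑ a : Fin 3, v a.succ ^ 2 := by gcongr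
    _ = η * (c⁻¹ * ∑ a : Fin 3, v a.succ ^ 2) := by ring
    _ ≤ η * (E * -(v 0 * p)) := by gcongr
    _ = E * (η * -(v 0 * p)) := by ring

/-- The scalar estimate behind the bound on `g⁰⁰`: here `a = g₀₀` and `t = g⁰⁰`. -/
lemma abs_add_one_le {a t p η : ℝ} (hη : η ≤ 1 / 2) (ha : |a + 1| ≤ η)
    (h1 : a * t + p = 1) (h2 : p ^ 2 ≤ η * -(t * p)) : |t + 1| ≤ 4 * η := by
  have ht : t ≠ 0 := by
    rintro rfl
    have : p = 1 := by linarith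
    subst this
    norm_num at h2
  obtain ⟨s, rfl⟩ : ∃ s, p = -(s * t) := ⟨-p / t, by field_simp⟩
  have ht2 : 0 < t ^ 2 := by positivity
  have hs : s ^ 2 ≤ η * s := by
    refine le_of_mul_le_mul_right ?_ ht2
    linarith
  obtain ⟨ha1, ha2⟩ := abs_le.1 ha
  have hη0 : 0 ≤ η := (abs_nonneg _).trans ha
  have hs0 : 0 ≤ s := by nlinarith
  have hs1 : s ≤ η := by nlinarith
  have hd : a - s < 0 := by linarith
  have htd : t = 1 / (a - s) := by
    rw [eq_div_iff hd.ne]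
    linarith
  have e : t + 1 = (-(1 + (a - s))) / (-(a - s)) := by
    rw [htd]
    field_simp [hd.ne]
  have hd' : 0 < -(a - s) := by linarith
  rw [e, abs_le, le_div_iff₀ hd', div_le_iff₀ hd']
  constructor <;> nlinarith

/-- There is a universal η₀ > 0 such that for all Ω ≥ 0, 0 ≤ q < 1,
c₁ ≥ 1, 0 ≤ η ≤ η₀, and every symmetric 4×4 real matrix g satisfying
(i) |g₀₀ + 1| ≤ η, (ii) c₁⁻¹·|X|² ≤ e^{−2Ω}·Σ g_{ab}X^aX^b ≤ c₁·|X|² for all X ∈ ℝ³,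
(iii) Σ (g_{0a})² ≤ η·c₁⁻¹·e^{2(1−q)Ω}, the matrix g is invertible and |g^{00} + 1| ≤ 4η. -/
theorem stmt_9 :
    ∃ η₀ : ℝ, 0 < η₀ ∧
      ∀ (Ω q c₁ η : ℝ) (g : Matrix (Fin 4) (Fin 4) ℝ),
        0 ≤ Ω → 0 ≤ q → q < 1 → 1 ≤ c₁ → 0 ≤ η → η ≤ η₀ →
        g.IsSymm →
        |g 0 0 + 1| ≤ η →
        (∀ X : Fin 3 → ℝ,
          c₁⁻¹ * ∑ a : Fin 3, X a ^ 2 ≤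
              Real.exp (-(2 * Ω)) * ∑ a : Fin 3, ∑ b : Fin 3, g a.succ b.succ * X a * X b ∧
            Real.exp (-(2 * Ω)) * ∑ a : Fin 3, ∑ b : Fin 3, g a.succ b.succ * X a * X b ≤
              c₁ * ∑ a : Fin 3, X a ^ 2) →
        (∑ a : Fin 3, g 0 a.succ ^ 2 ≤ η * c₁⁻¹ * Real.exp (2 * (1 - q) * Ω)) →
        IsUnit g.det ∧ |g⁻¹ 0 0 + 1| ≤ 4 * η := by
  refine ⟨1 / 2, by norm_num, ?_⟩
  intro Ω q c₁ η g hΩ hq _ hc hη hη2 hg h00 hA hb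
  have hE := Real.exp_pos (-(2 * Ω))
  have hci : 0 < c₁⁻¹ := by positivity
  -- Since `q Ω ≥ 0`, the growth allowed for `g₀ₐ` is at most `e^{2Ω}`.
  have hb' : Real.exp (-(2 * Ω)) * ∑ a : Fin 3, g 0 a.succ ^ 2 ≤ η * c₁⁻¹ := by
    have h1 : Real.exp (-(2 * Ω)) * Real.exp (2 * (1 - q) * Ω) ≤ 1 := by
      rw [← Real.exp_add, Real.exp_le_one_iff]
      nlinarith [mul_nonneg hq hΩ]
    calc _ ≤ Real.exp (-(2 * Ω)) * (η * c₁⁻¹ * Real.exp (2 * (1 - q) * Ω)) := by gcongr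
      _ = η * c₁⁻¹ * (Real.exp (-(2 * Ω)) * Real.exp (2 * (1 - q) * Ω)) := by ring
      _ ≤ η * c₁⁻¹ * 1 := by gcongr
      _ = _ := mul_one _
  have key := sq_dot_le hE hη hg (fun X => (hA X).1) hb'
  have hdet : g.det ≠ 0 := by
    intro h0
    obtain ⟨v, hv, hgv⟩ := Matrix.exists_mulVec_eq_zero_iff.2 h0
    obtain ⟨k1, k2⟩ := key v fun a => by rw [hgv]; rfl
    have hz := congrFun hgv 0
    rw [Matrix.mulVec, dotProduct, Fin.sum_univ_succ, Pi.zero_apply] at hz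
    obtain ⟨-, h2⟩ := abs_le.1 h00
    have hneg : g 0 0 < 0 := by linarith
    have hp : ∑ a : Fin 3, g 0 a.succ * v a.succ = -(g 0 0 * v 0) := by linarith
    rw [hp] at k1 k2
    have hv0 : v 0 = 0 := by
      by_contra hne
      have ht2 : 0 < v 0 ^ 2 := by positivity
      nlinarith [mul_pos ht2 (mul_pos_of_neg_of_neg hneg hneg),
        mul_nonneg hη (mul_pos ht2 (neg_pos.2 hneg)).le]
    rw [hv0] at k1
    have hS : ∑ a : Fin 3, v a.succ ^ 2 = 0 := by
      refine le_antisymm ?_ (Finset.sum_nonneg fun a _ => sq_nonneg _)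
      refine le_of_mul_le_mul_left ?_ hci
      simpa using k1
    rw [Finset.sum_eq_zero_iff_of_nonneg fun a _ => sq_nonneg _] at hS
    refine hv (funext fun i => ?_)
    refine Fin.cases hv0 (fun a => ?_) i
    exact pow_eq_zero_iff two_ne_zero |>.1 (hS a (Finset.mem_univ a))
  have hu : IsUnit g.det := isUnit_iff_ne_zero.2 hdet
  refine ⟨hu, ?_⟩
  have hcol : ∀ i, (g.mulVec fun j => g⁻¹ j 0) i = (1 : Matrix (Fin 4) (Fin 4) ℝ) i 0 := by
    intro i
    rw [← Matrix.mul_nonsing_inv g hu]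
    rfl
  obtain ⟨-, k2⟩ := key (fun j => g⁻¹ j 0) fun a => by
    rw [hcol, Matrix.one_apply_ne (Fin.succ_ne_zero a)]
  have hz := hcol 0
  rw [Matrix.mulVec, dotProduct, Fin.sum_univ_succ, Matrix.one_apply_eq] at hz
  exact abs_add_one_le hη2 h00 hz k2
end

section
/- There exists a constant η₀ > 0 with the following property. Let Ω ≥ 0, 0 ≤ q < 1, c₁ ≥ 1, and 0 ≤ η ≤ η₀ be real numbers, and let g be a symmetric 4×4 real matrix with entries g_{μν}, μ,ν ∈ {0,1,2,3}, satisfying: (i) |g₀₀ + 1| ≤ η; (ii) c₁⁻¹·Σ_{a}(X^a)² ≤ e^{−2Ω}·Σ_{a,b} g_{ab} X^a X^b ≤ c₁·Σ_{a}(X^a)² for all (X¹,X²,X³) ∈ ℝ³; (iii) Σ_{a=1}^{3} (g_{0a})² ≤ η·c₁⁻¹·e^{2(1−q)Ω}. Then g is invertible and, writing g^{μν} for the entries of g⁻¹, one has for all (X₁,X₂,X₃) ∈ ℝ³: (2/(3c₁))·Σ_{a}(X_a)² ≤ e^{2Ω}·Σ_{a,b} g^{ab} X_a X_b ≤ (3c₁/2)·Σ_{a}(X_a)².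 -/
/-!
Split `g` into `g₀₀`, the shift `b = (g₀ₐ)` and the spatial block `h = (gₐᵦ)`. The spatial block of
`g⁻¹` is the inverse of the Schur complement `S = h + b bᵀ / (-g₀₀)`. With `E = e^{2Ω}`, the
hypotheses give `E / c₁ ≤ h ≤ c₁ E` and `|b|² ≤ η E / c₁` (because `qΩ ≥ 0`), so for `η ≤ 1/4` the
rank-one term is non-negative and at most `c₁ E / 2`, whence `E / c₁ ≤ S ≤ (3/2) c₁ E`
(`schurForm_lower`, `schurForm_upper`). Inverting these bounds gives the claim.

The inversion is done without matrix inverses of `S`: if `g v = (0, X)` and `Y` is the spatial part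
of `v`, then `X = S Y`, so `X · Y = S(Y, Y)`; with `X = 0` this gives invertibility of `g`, and with
`v = g⁻¹ (0, X)` it identifies `Σ g^{ab} Xₐ X_b` with `S(Y, Y)`. The upper bound is then
Cauchy–Schwarz for `X · Y`, and the lower bound is the positivity of `S` at `Y - t X` for a
suitable `t`.
-/

/-- The quadratic form `Y ↦ S(Y, Y)` of the Schur complement `S = h + b bᵀ / (-g₀₀)` of `g₀₀`. -/
noncomputable def schurForm (g : Matrix (Fin 4) (Fin 4) ℝ) (Y : Fin 3 → ℝ) : ℝ :=
  (∑ a : Fin 3, ∑ b : Fin 3, g a.succ b.succ * Y a * Y b) +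
    (∑ a : Fin 3, g 0 a.succ * Y a) ^ 2 / (-g 0 0)

/-- The first component of `g v = (0, X)` determines `v₀` from the spatial part of `v`. -/
lemma time_component {g : Matrix (Fin 4) (Fin 4) ℝ} {v : Fin 4 → ℝ} (h00 : g 0 0 < 0)
    (hv : g.mulVec v 0 = 0) :
    v 0 = (∑ a : Fin 3, g 0 a.succ * v a.succ) / (-g 0 0) := by
  rw [eq_div_iff (by linarith)]
  rw [Matrix.mulVec, dotProduct, Fin.sum_univ_succ] at hv
  linarith

/-- If `g v = (0, X)` and `Y` is the spatial part of `v`, then `X = S Y`, so the terms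
`S(Y, Y)` and `S(Y, Z)` in the expansion of `S(Y - t Z, Y - t Z)` are `X · Y` and `X · Z`. -/
lemma schurForm_sub {g : Matrix (Fin 4) (Fin 4) ℝ} {v : Fin 4 → ℝ} (hs : g.IsSymm)
    (h00 : g 0 0 < 0) (hv : g.mulVec v 0 = 0) (Z : Fin 3 → ℝ) (t : ℝ) :
    schurForm g (fun a => v a.succ - t * Z a) =
      (∑ a : Fin 3, g.mulVec v a.succ * v a.succ) - 2 * t * (∑ a : Fin 3, g.mulVec v a.succ * Z a)
        + t ^ 2 * schurForm g Z := by
  have h0 := time_component h00 hv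
  have hne : g 0 0 ≠ 0 := h00.ne
  have s1 := hs.apply 0 1
  have s2 := hs.apply 0 2
  have s3 := hs.apply 0 3
  have s4 := hs.apply 1 2
  have s5 := hs.apply 1 3
  have s6 := hs.apply 2 3
  simp only [schurForm, Matrix.mulVec, dotProduct, Fin.sum_univ_four, Fin.sum_univ_three] at h0 ⊢
  simp only [Fin.succ_zero_eq_one, Fin.succ_one_eq_two, show (Fin.succ (2 : Fin 3)) = 3 from rfl]
    at h0 ⊢
  rw [h0, s1, s2, s3, s4, s5, s6]
  field_simp
  ring

lemma schurForm_lower {g : Matrix (Fin 4) (Fin 4) ℝ} {m : ℝ} (h00 : g 0 0 < 0) (Y : Fin 3 → ℝ)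
    (h : m * ∑ a : Fin 3, Y a ^ 2 ≤
      ∑ a : Fin 3, ∑ b : Fin 3, g a.succ b.succ * Y a * Y b) :
    m * ∑ a : Fin 3, Y a ^ 2 ≤ schurForm g Y := by
  have : 0 ≤ (∑ a : Fin 3, g 0 a.succ * Y a) ^ 2 / (-g 0 0) :=
    div_nonneg (sq_nonneg _) (by linarith)
  unfold schurForm
  linarith

lemma schurForm_upper {g : Matrix (Fin 4) (Fin 4) ℝ} {M : ℝ} (h00 : g 0 0 ≤ -3 / 4)
    (hb : ∑ a : Fin 3, g 0 a.succ ^ 2 ≤ M / 4) (hM : 0 ≤ M) (Y : Fin 3 → ℝ)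
    (h : ∑ a : Fin 3, ∑ b : Fin 3, g a.succ b.succ * Y a * Y b ≤ M * ∑ a : Fin 3, Y a ^ 2) :
    schurForm g Y ≤ 3 / 2 * M * ∑ a : Fin 3, Y a ^ 2 := by
  have hcs := Finset.sum_mul_sq_le_sq_mul_sq Finset.univ (fun a : Fin 3 => g 0 a.succ) Y
  have hY : 0 ≤ ∑ a : Fin 3, Y a ^ 2 := Finset.sum_nonneg fun a _ => sq_nonneg _
  have h1 := mul_le_mul_of_nonneg_right hb hY
  have h2 : (∑ a : Fin 3, g 0 a.succ * Y a) ^ 2 / (-g 0 0) ≤ 1 / 2 * M * ∑ a : Fin 3, Y a ^ 2 := by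
    rw [div_le_iff₀ (by linarith)]
    have h3 : 0 ≤ M * ∑ a : Fin 3, Y a ^ 2 := mul_nonneg hM hY
    nlinarith
  unfold schurForm
  linarith

/-- There is a universal η₀ > 0 such that for all Ω ≥ 0, 0 ≤ q < 1,
c₁ ≥ 1, 0 ≤ η ≤ η₀, and every symmetric 4×4 real matrix g satisfying
(i) |g₀₀ + 1| ≤ η, (ii) c₁⁻¹·|X|² ≤ e^{−2Ω}·Σ g_{ab}X^aX^b ≤ c₁·|X|² for all X ∈ ℝ³,
(iii) Σ (g_{0a})² ≤ η·c₁⁻¹·e^{2(1−q)Ω}, the matrix g is invertible and for all X ∈ ℝ³: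
(2/(3c₁))·Σ X_a² ≤ e^{2Ω}·Σ g^{ab} X_a X_b ≤ (3c₁/2)·Σ X_a². -/
theorem stmt_11 :
    ∃ η₀ : ℝ, 0 < η₀ ∧
      ∀ (Ω q c₁ η : ℝ) (g : Matrix (Fin 4) (Fin 4) ℝ),
        0 ≤ Ω → 0 ≤ q → q < 1 → 1 ≤ c₁ → 0 ≤ η → η ≤ η₀ →
        g.IsSymm →
        |g 0 0 + 1| ≤ η →
        (∀ X : Fin 3 → ℝ,
          c₁⁻¹ * ∑ a : Fin 3, X a ^ 2 ≤
              Real.exp (-(2 * Ω)) * ∑ a : Fin 3, ∑ b : Fin 3, g a.succ b.succ * X a * X b ∧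
            Real.exp (-(2 * Ω)) * ∑ a : Fin 3, ∑ b : Fin 3, g a.succ b.succ * X a * X b ≤
              c₁ * ∑ a : Fin 3, X a ^ 2) →
        (∑ a : Fin 3, g 0 a.succ ^ 2 ≤ η * c₁⁻¹ * Real.exp (2 * (1 - q) * Ω)) →
        IsUnit g.det ∧
          ∀ X : Fin 3 → ℝ,
            2 / (3 * c₁) * ∑ a : Fin 3, X a ^ 2 ≤
                Real.exp (2 * Ω) * ∑ a : Fin 3, ∑ b : Fin 3, g⁻¹ a.succ b.succ * X a * X b ∧
              Real.exp (2 * Ω) * ∑ a : Fin 3, ∑ b : Fin 3, g⁻¹ a.succ b.succ * X a * X b ≤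
                3 * c₁ / 2 * ∑ a : Fin 3, X a ^ 2 := by
  refine ⟨1 / 4, by norm_num, ?_⟩
  intro Ω q c₁ η g hΩ hq _ hc hη hη' hs h00 hh hb
  obtain ⟨_, h00u⟩ := abs_le.1 h00
  have hc0 : 0 < c₁ := by linarith
  have hneg : g 0 0 < 0 := by linarith
  set E := Real.exp (2 * Ω) with hE
  have hE0 : 0 < E := Real.exp_pos _
  have hEinv : Real.exp (-(2 * Ω)) = E⁻¹ := by rw [hE, Real.exp_neg]
  rw [hEinv] at hh
  have hm : 0 < E / c₁ := by positivity
  have hM : 0 < c₁ * E := by positivity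
  have lower : ∀ Y : Fin 3 → ℝ, E / c₁ * ∑ a : Fin 3, Y a ^ 2 ≤ schurForm g Y := by
    intro Y
    refine schurForm_lower hneg Y ?_
    have := (le_inv_mul_iff₀ hE0).1 (hh Y).1
    calc E / c₁ * ∑ a : Fin 3, Y a ^ 2 = E * (c₁⁻¹ * ∑ a : Fin 3, Y a ^ 2) := by ring
      _ ≤ _ := this
  have upper : ∀ Y : Fin 3 → ℝ, schurForm g Y ≤ 3 / 2 * (c₁ * E) * ∑ a : Fin 3, Y a ^ 2 := by
    intro Y
    refine schurForm_upper (by linarith) ?_ hM.le Y ?_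
    · have hexp : Real.exp (2 * (1 - q) * Ω) ≤ E :=
        Real.exp_le_exp.2 (by nlinarith [mul_nonneg hq hΩ])
      have hci : c₁⁻¹ ≤ c₁ := (inv_le_one_of_one_le₀ hc).trans hc
      calc _ ≤ η * c₁⁻¹ * Real.exp (2 * (1 - q) * Ω) := hb
        _ ≤ 1 / 4 * c₁ * E := by gcongr
        _ = c₁ * E / 4 := by ring
    · have := (inv_mul_le_iff₀ hE0).1 (hh Y).2
      calc _ ≤ E * (c₁ * ∑ a : Fin 3, Y a ^ 2) := this
        _ = _ := by ring
  -- `X · Y = S(Y, Y)` whenever `g v = (0, X)` and `Y` is the spatial part of `v`.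
  have energy : ∀ v : Fin 4 → ℝ, g.mulVec v 0 = 0 →
      schurForm g (fun a => v a.succ) = ∑ a : Fin 3, g.mulVec v a.succ * v a.succ := by
    intro v hv
    simpa using schurForm_sub hs hneg hv 0 0
  have hdet : g.det ≠ 0 := by
    intro h
    obtain ⟨v, hv0, hv⟩ := Matrix.exists_mulVec_eq_zero_iff.2 h
    have h1 := energy v (by simp [hv])
    have h2 := lower (fun a => v a.succ)
    rw [h1] at h2
    simp only [hv, Pi.zero_apply, zero_mul, Finset.sum_const_zero] at h2
    have h3 : ∑ a : Fin 3, v a.succ ^ 2 = 0 :=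
      le_antisymm (nonpos_of_mul_nonpos_right h2 hm) (Finset.sum_nonneg fun a _ => sq_nonneg _)
    have h4 : ∀ a : Fin 3, v a.succ = 0 := fun a => by
      simpa using (Finset.sum_eq_zero_iff_of_nonneg fun a _ => sq_nonneg _).1 h3 a
        (Finset.mem_univ a)
    apply hv0
    funext i
    refine Fin.cases ?_ h4 i
    have h5 := time_component hneg (v := v) (by simp [hv])
    simpa [h4] using h5
  refine ⟨hdet.isUnit, fun X => ?_⟩
  set w : Fin 4 → ℝ := Fin.cons 0 X with hw
  set v : Fin 4 → ℝ := g⁻¹.mulVec w with hvdef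
  have hgv : g.mulVec v = w := by
    rw [hvdef, Matrix.mulVec_mulVec, Matrix.mul_nonsing_inv _ hdet.isUnit, Matrix.one_mulVec]
  have hgv0 : g.mulVec v 0 = 0 := by rw [hgv]; rfl
  have hgva : ∀ a : Fin 3, g.mulVec v a.succ = X a := fun a => by rw [hgv]; rfl
  have hQ : ∑ a : Fin 3, ∑ b : Fin 3, g⁻¹ a.succ b.succ * X a * X b =
      ∑ a : Fin 3, X a * v a.succ := by
    refine Finset.sum_congr rfl fun a _ => ?_
    rw [hvdef, Matrix.mulVec, dotProduct, Fin.sum_univ_succ (n := 3)]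
    simp only [hw, Fin.cons_zero, Fin.cons_succ, mul_zero, zero_add, Finset.mul_sum]
    exact Finset.sum_congr rfl fun b _ => by ring
  rw [hQ]
  have hen := energy v hgv0
  have hlow := lower (fun a => v a.succ)
  have hsub := schurForm_sub hs hneg hgv0 X (2 / (3 * (c₁ * E)))
  have hpos := lower (fun a => v a.succ - 2 / (3 * (c₁ * E)) * X a)
  have hup := upper X
  have hcs := Finset.sum_mul_sq_le_sq_mul_sq Finset.univ X (fun a : Fin 3 => v a.succ)
  have hXX : ∑ a : Fin 3, X a * X a = ∑ a : Fin 3, X a ^ 2 := by simp only [sq]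
  simp only [hgva, hXX] at hen hsub
  rw [hen] at hlow
  have hX : 0 ≤ ∑ a : Fin 3, X a ^ 2 := Finset.sum_nonneg fun a _ => sq_nonneg _
  have hY : 0 ≤ ∑ a : Fin 3, v a.succ ^ 2 := Finset.sum_nonneg fun a _ => sq_nonneg _
  have hZ : 0 ≤ ∑ a : Fin 3, (v a.succ - 2 / (3 * (c₁ * E)) * X a) ^ 2 :=
    Finset.sum_nonneg fun a _ => sq_nonneg _
  have hpos' := (mul_nonneg hm.le hZ).trans hpos
  rw [hsub] at hpos'
  generalize (∑ a : Fin 3, X a * v a.succ) = P at *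
  generalize (∑ a : Fin 3, X a ^ 2) = x at *
  generalize (∑ a : Fin 3, v a.succ ^ 2) = y at *
  constructor
  -- The step `t = 2 / (3 c₁ E)` minimises `P - 2 t x + t² (3/2) c₁ E x`.
  · have h1 := mul_le_mul_of_nonneg_left hup (sq_nonneg (2 / (3 * (c₁ * E))))
    have h2 : 2 / (3 * (c₁ * E)) * x ≤ P := by
      have h3 : (2 / (3 * (c₁ * E))) ^ 2 * (3 / 2 * (c₁ * E) * x) = 2 / (3 * (c₁ * E)) * x := by
        field_simp
      linarith
    calc 2 / (3 * c₁) * x = E * (2 / (3 * (c₁ * E)) * x) := by field_simp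
      _ ≤ E * P := by gcongr
  · have hP : 0 ≤ P := (mul_nonneg hm.le hY).trans hlow
    have h1 : E * P ≤ c₁ * x := by
      have h2 : E * y ≤ c₁ * P := by
        rw [div_mul_eq_mul_div, div_le_iff₀ hc0] at hlow
        linarith
      rcases hP.eq_or_lt with h0 | h0
      · rw [← h0, mul_zero]
        positivity
      · refine le_of_mul_le_mul_right ?_ h0
        calc E * P * P = E * P ^ 2 := by ring
          _ ≤ E * (x * y) := by gcongr
          _ = x * (E * y) := by ring
          _ ≤ x * (c₁ * P) := by gcongr
          _ = c₁ * x * P := by ring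
    have : 0 ≤ c₁ * x := by positivity
    linarith
end

section
/- Let g be an invertible symmetric 4×4 real matrix with entries g_{μν}, μ,ν ∈ {0,1,2,3}, and write g^{μν} for the entries of g⁻¹. Let u = (u⁰,u¹,u²,u³) ∈ ℝ⁴ satisfy the normalization Σ_{α,β} g_{αβ} u^α u^β = −1, define u_μ := Σ_α g_{μα} u^α, and assume u₀ ≠ 0. Let P and c be real constants with P ≠ 0 and c ≠ 0, and set Π^{μν} := u^μ u^ν + g^{μν}. Define the 4×4 matrix A⁰ whose first row is ( u⁰, −(1+c²)P·u₁/u₀, −(1+c²)P·u₂/u₀, −(1+c²)P·u₃/u₀ ), whose (j+1)-st row (j = 1,2,3) has first entry (c²/((1+c²)P))·Π^{j0}, diagonal entry u⁰, and zeros elsewhere. Then det(A⁰) = (u⁰)²·( (u⁰)²(1−c²) − c²·g^{00} ) = (u⁰)²·( (u⁰)² − c²·Π^{00} ). -/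
/-!
The matrix `A⁰` is an arrow matrix, so its determinant is `(u⁰)⁴ - (u⁰)² Σ_j b_j d_j`, where `b_j`
and `d_j` are the off-diagonal entries of the first row and the first column. The factors
`(1 + c²) P` cancel in `b_j d_j`, leaving `-c² u_j Π^{j0} / u₀`. As `Π` projects onto the
orthogonal complement of `u`, `Σ_μ u_μ Π^{μ0} = 0`, hence `Σ_j u_j Π^{j0} = -u₀ Π^{00}`.
-/

/-- The determinant of a `4 × 4` arrow matrix with constant diagonal. -/
lemma det_arrow (a b₁ b₂ b₃ d₁ d₂ d₃ : ℝ) :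
    (!![a, b₁, b₂, b₃; d₁, a, 0, 0; d₂, 0, a, 0; d₃, 0, 0, a] :
      Matrix (Fin 4) (Fin 4) ℝ).det = a ^ 4 - a ^ 2 * (b₁ * d₁ + b₂ * d₂ + b₃ * d₃) := by
  simp [Matrix.det_succ_row_zero, Fin.sum_univ_succ, Fin.succAbove]
  ring

/-- The lowered vector `u_μ` is annihilated by the projection `Π^{μν} = u^μ u^ν + g^{μν}`. -/
lemma sum_lowered_mul_proj (g : Matrix (Fin 4) (Fin 4) ℝ) (hsymm : g.IsSymm)
    (hg : IsUnit g.det) (u : Fin 4 → ℝ)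
    (hnorm : ∑ α : Fin 4, ∑ β : Fin 4, g α β * u α * u β = -1) (ν : Fin 4) :
    ∑ μ : Fin 4, (∑ α : Fin 4, g μ α * u α) * (u μ * u ν + g⁻¹ μ ν) = 0 := by
  have hinv : ∑ μ, (∑ α, g μ α * u α) * g⁻¹ μ ν = u ν := by
    calc ∑ μ, (∑ α, g μ α * u α) * g⁻¹ μ ν
        = ∑ α, u α * (g * g⁻¹) α ν := by
          simp only [Matrix.mul_apply, Finset.sum_mul, Finset.mul_sum]
          rw [Finset.sum_comm]
          refine Finset.sum_congr rfl fun α _ => Finset.sum_congr rfl fun μ _ => ?_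
          rw [hsymm.apply α μ]
          ring
      _ = u ν := by
          rw [Matrix.mul_nonsing_inv g hg]
          simp [Matrix.one_apply]
  have huu : ∑ μ, (∑ α, g μ α * u α) * (u μ * u ν) = -u ν := by
    calc ∑ μ, (∑ α, g μ α * u α) * (u μ * u ν)
        = (∑ α, ∑ β, g α β * u α * u β) * u ν := by
          simp only [Finset.sum_mul]
          refine Finset.sum_congr rfl fun α _ => Finset.sum_congr rfl fun μ _ => ?_
          ring
      _ = -u ν := by rw [hnorm]; ring
  simp only [mul_add, Finset.sum_add_distrib, hinv, huu]
  ring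

/-- Let g be an invertible symmetric 4×4 real matrix, u ∈ ℝ⁴ with
Σ g_{αβ}u^αu^β = −1, u_μ := Σ g_{μα}u^α, u₀ ≠ 0, let P ≠ 0, c ≠ 0 be real constants,
and Π^{μν} := u^μu^ν + g^{μν}. Then the fluid matrix A⁰ satisfies
det(A⁰) = (u⁰)²·((u⁰)²(1−c²) − c²·g^{00}) = (u⁰)²·((u⁰)² − c²·Π^{00}). -/
theorem stmt_12 (g : Matrix (Fin 4) (Fin 4) ℝ) (hsymm : g.IsSymm) (hg : IsUnit g.det)
    (u : Fin 4 → ℝ)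
    (hnorm : ∑ α : Fin 4, ∑ β : Fin 4, g α β * u α * u β = -1)
    (ul : Fin 4 → ℝ) (hul : ∀ μ : Fin 4, ul μ = ∑ α : Fin 4, g μ α * u α)
    (hu0 : ul 0 ≠ 0)
    (P c : ℝ) (hP : P ≠ 0) (hc : c ≠ 0)
    (Proj : Fin 4 → Fin 4 → ℝ)
    (hProj : ∀ μ ν : Fin 4, Proj μ ν = u μ * u ν + g⁻¹ μ ν)
    (A0 : Matrix (Fin 4) (Fin 4) ℝ)
    (hA0 : A0 =
      !![u 0, -((1 + c ^ 2) * P) * ul 1 / ul 0, -((1 + c ^ 2) * P) * ul 2 / ul 0,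
          -((1 + c ^ 2) * P) * ul 3 / ul 0;
        c ^ 2 / ((1 + c ^ 2) * P) * Proj 1 0, u 0, 0, 0;
        c ^ 2 / ((1 + c ^ 2) * P) * Proj 2 0, 0, u 0, 0;
        c ^ 2 / ((1 + c ^ 2) * P) * Proj 3 0, 0, 0, u 0]) :
    A0.det = u 0 ^ 2 * (u 0 ^ 2 * (1 - c ^ 2) - c ^ 2 * g⁻¹ 0 0) ∧
      A0.det = u 0 ^ 2 * (u 0 ^ 2 - c ^ 2 * Proj 0 0) := by
  have horth : ul 0 * Proj 0 0 + ul 1 * Proj 1 0 + ul 2 * Proj 2 0 + ul 3 * Proj 3 0 = 0 := by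
    have h := sum_lowered_mul_proj g hsymm hg u hnorm 0
    simp only [← hul, ← hProj] at h
    rwa [Fin.sum_univ_four] at h
  have hdet : A0.det = u 0 ^ 2 * (u 0 ^ 2 - c ^ 2 * Proj 0 0) := by
    have hc1 : 1 + c ^ 2 ≠ 0 := by positivity
    have hProj00 : Proj 0 0 =
        -(ul 1 * Proj 1 0 + ul 2 * Proj 2 0 + ul 3 * Proj 3 0) / ul 0 := by
      rw [eq_div_iff hu0]
      linarith
    rw [hA0, det_arrow, hProj00]
    field_simp
    ring
  refine ⟨?_, hdet⟩
  rw [hdet, hProj]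
  ring
end

section
/- Let T > 0 and ε > 0 be real numbers, let b : [0,T] → ℝ be continuous, positive, and non-decreasing, and let y : [0,T] → ℝ be continuous and nonnegative. Suppose that for every t₁ ∈ [0,T] and every t ∈ [t₁,T], y(t)² ≤ y(t₁)² + ∫_{t₁}^{t} ( −b(τ)·y(τ)² + ε·y(τ) ) dτ. Then for all t₁, t ∈ [0,T] with t₁ ≤ t, y(t) ≤ y(t₁) + ε/b(t₁). -/
/-!
The right-hand side `y (ε - b y)` is nonpositive wherever `b y ≥ ε`. Put `M = y t₁ + ε / b t₁`.
If `y t > M`, let `s` be the last time in `[t₁, t]` with `y s ≤ M`. On `(s, t]` it holds that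
`y > M ≥ ε / b t₁` and `b ≥ b t₁`, so the integrand is nonpositive there, and the hypothesis on
`[s, t]` gives `y t ≤ y s ≤ M`, a contradiction.
-/

/-- Let T > 0, ε > 0, b continuous, positive, non-decreasing on [0,T],
y continuous and nonnegative on [0,T]. If for every t₁ ∈ [0,T] and t ∈ [t₁,T],
y(t)² ≤ y(t₁)² + ∫_{t₁}^t (−b(τ)y(τ)² + εy(τ))dτ, then for all 0 ≤ t₁ ≤ t ≤ T,
y(t) ≤ y(t₁) + ε/b(t₁). -/
theorem stmt_15 (T ε : ℝ) (hT : 0 < T) (hε : 0 < ε) (b y : ℝ → ℝ)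
    (hb : ContinuousOn b (Set.Icc 0 T))
    (hbpos : ∀ t ∈ Set.Icc (0 : ℝ) T, 0 < b t)
    (hbmono : MonotoneOn b (Set.Icc 0 T))
    (hy : ContinuousOn y (Set.Icc 0 T))
    (hynn : ∀ t ∈ Set.Icc (0 : ℝ) T, 0 ≤ y t)
    (hineq : ∀ t₁ ∈ Set.Icc (0 : ℝ) T, ∀ t ∈ Set.Icc t₁ T,
      y t ^ 2 ≤ y t₁ ^ 2 + ∫ τ in t₁..t, (-(b τ) * y τ ^ 2 + ε * y τ)) :
    ∀ t₁ ∈ Set.Icc (0 : ℝ) T, ∀ t ∈ Set.Icc (0 : ℝ) T, t₁ ≤ t →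
      y t ≤ y t₁ + ε / b t₁ := by
  intro t₁ ht₁ t ht hle
  by_contra! hlt
  have hb₁ := hbpos t₁ ht₁
  have hdiv : 0 < ε / b t₁ := div_pos hε hb₁
  set M := y t₁ + ε / b t₁ with hM
  have hMε : ε / b t₁ ≤ M := by linarith [hynn t₁ ht₁]
  have hsub : Set.Icc t₁ t ⊆ Set.Icc 0 T := Set.Icc_subset_Icc ht₁.1 ht.2
  have hcomp : IsCompact (Set.Icc t₁ t ∩ y ⁻¹' Set.Iic M) :=
    isCompact_Icc.of_isClosed_subset
      ((hy.mono hsub).preimage_isClosed_of_isClosed isClosed_Icc isClosed_Iic)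
      Set.inter_subset_left
  -- `s` is the last time in `[t₁, t]` at which `y ≤ M`.
  obtain ⟨s, ⟨hs, hsM⟩, hmax⟩ := hcomp.exists_isGreatest
    ⟨t₁, Set.left_mem_Icc.2 hle, show y t₁ ≤ M by linarith⟩
  have hsle : y s ≤ M := hsM
  have hint : ∫ τ in s..t, (-(b τ) * y τ ^ 2 + ε * y τ) ≤ 0 := by
    rw [intervalIntegral.integral_of_le hs.2]
    refine MeasureTheory.setIntegral_nonpos measurableSet_Ioc fun τ hτ => ?_
    have hτI : τ ∈ Set.Icc t₁ t := ⟨hs.1.trans hτ.1.le, hτ.2⟩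
    have hyτ : M < y τ := by
      by_contra! h
      exact absurd (hmax ⟨hτI, h⟩) (not_le.2 hτ.1)
    have hbτ : b t₁ ≤ b τ := hbmono ht₁ (hsub hτI) hτI.1
    have hy0 : 0 ≤ y τ := hynn τ (hsub hτI)
    have h1 : ε ≤ b t₁ * y τ := by
      rw [← div_le_iff₀' hb₁]; linarith
    have h2 : ε ≤ b τ * y τ := h1.trans (mul_le_mul_of_nonneg_right hbτ hy0)
    nlinarith [mul_le_mul_of_nonneg_right h2 hy0]
  have hsq : y t ^ 2 ≤ y s ^ 2 := by
    linarith [hineq s (hsub hs) t ⟨hs.2, ht.2⟩]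
  have := (sq_le_sq₀ (hynn t ht) (hynn s (hsub hs))).1 hsq
  linarith
end

section
/- Let c ≠ 0, ϰ be real constants, and let ω : ℝ⁴ → ℝ be a function. Let g : ℝ⁴ → (4×4 real matrices) be differentiable with g(x) symmetric and invertible for every x, with pointwise inverse entries g^{μν}(x). Let u⁰,u¹,u²,u³ : ℝ⁴ → ℝ be differentiable with Σ_{α,β} g_{αβ}(x) u^α(x) u^β(x) = −1 for all x; set u_μ := Σ_α g_{μα} u^α and assume u₀(x) ≠ 0 for all x. Let P : ℝ⁴ → ℝ be differentiable with (1+c²)·P(x) ≠ 0 for all x, and set Π^{μν} := u^μ u^ν + g^{μν}. Let Ṗ, u̇¹, u̇², u̇³ : ℝ⁴ → ℝ be differentiable and 𝔊¹,𝔊²,𝔊³ : ℝ⁴ → ℝ be functions such that for j = 1,2,3 and all x: Σ_{α=0}^{3} u^α ∂_α u̇^j + (c²/((1+c²)P))·Σ_{α=0}^{3} Π^{jα} ∂_α Ṗ = (ϰ − 2)·ω·u̇^j + 𝔊^j. Define u̇⁰ := −(1/u₀)·Σ_{a=1}^{3} u_a u̇^a. Then for all x: Σ_{α=0}^{3} u^α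 ∂_α u̇⁰ + (c²/((1+c²)P))·Σ_{α=0}^{3} Π^{0α} ∂_α Ṗ = 𝔊⁰, where 𝔊⁰ := −Σ_{a=1}^{3} [ Σ_{α=0}^{3} u^α ∂_α (u_a/u₀) ]·u̇^a − (ϰ − 2)·ω·(1/u₀)·Σ_{a=1}^{3} u_a u̇^a − (1/u₀)·Σ_{a=1}^{3} u_a 𝔊^a. -/
/-!
The covector `u_μ` annihilates the projection: `Σ_μ u_μ Π^{μα} = 0`, because `u_μ u^μ = -1` and
`Σ_μ u_μ g^{μα} = u^α` (`sum_lower_mul_proj_eq_zero`). Hence contracting the three spatial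
equations with `-u_a/u₀` turns their pressure terms into `Π^{0α} ∂_α Ṗ`, while the Leibniz rule
applied to `u̇⁰ = -Σ_a (u_a/u₀) u̇^a` (`pd_neg_sum_mul`) turns their transport terms into
`u^α ∂_α u̇⁰` up to the commutator terms `[u^α ∂_α (u_a/u₀)] u̇^a`.
-/

/-- The partial derivative `∂_α f` of a function `f : ℝ⁴ → ℝ` in the α-th coordinate
direction. -/
noncomputable def pd (α : Fin 4) (f : (Fin 4 → ℝ) → ℝ) (x : Fin 4 → ℝ) : ℝ :=
  fderiv ℝ f x (Pi.single α 1)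

theorem pd_neg_sum_mul (α : Fin 4) (f h : Fin 3 → (Fin 4 → ℝ) → ℝ)
    (hf : ∀ a, Differentiable ℝ (f a)) (hh : ∀ a, Differentiable ℝ (h a)) (x : Fin 4 → ℝ) :
    pd α (fun y => -∑ a : Fin 3, f a y * h a y) x =
      -∑ a : Fin 3, (pd α (f a) x * h a x + f a x * pd α (h a) x) := by
  have key : HasFDerivAt (fun y => -∑ a : Fin 3, f a y * h a y)
      (-∑ a : Fin 3, (f a x • fderiv ℝ (h a) x + h a x • fderiv ℝ (f a) x)) x :=
    (HasFDerivAt.fun_sum fun a _ => ((hf a x).hasFDerivAt.mul (hh a x).hasFDerivAt)).neg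
  unfold pd
  rw [key.fderiv]
  simp only [neg_apply, sum_apply, add_apply, smul_apply, smul_eq_mul]
  congr 1
  exact Finset.sum_congr rfl fun a _ => by ring

/-- The lowered velocity `g u` annihilates the projection `u uᵀ + g⁻¹` when `g(u, u) = -1`. -/
theorem sum_lower_mul_proj_eq_zero (A : Matrix (Fin 4) (Fin 4) ℝ) (hs : A.IsSymm)
    (hA : IsUnit A.det) (v : Fin 4 → ℝ)
    (hn : ∑ α : Fin 4, ∑ β : Fin 4, A α β * v α * v β = -1) (ν : Fin 4) :
    ∑ μ : Fin 4, (∑ α : Fin 4, A μ α * v α) * (v μ * v ν + A⁻¹ μ ν) = 0 := by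
  have h1 : ∑ μ : Fin 4, (∑ α : Fin 4, A μ α * v α) * v μ = -1 := by
    rw [← hn]
    refine Finset.sum_congr rfl fun μ _ => ?_
    rw [Finset.sum_mul]
    exact Finset.sum_congr rfl fun α _ => by ring
  have h2 : ∑ μ : Fin 4, (∑ α : Fin 4, A μ α * v α) * A⁻¹ μ ν = v ν := by
    change Matrix.vecMul (A.mulVec v) A⁻¹ ν = v ν
    rw [← Matrix.vecMul_transpose, hs.eq, Matrix.vecMul_vecMul, Matrix.mul_nonsing_inv A hA,
      Matrix.vecMul_one]
  simp only [mul_add, Finset.sum_add_distrib, ← mul_assoc, ← Finset.sum_mul, h1, h2]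
  ring

/-- If (Ṗ, u̇¹, u̇², u̇³) solve the linearized momentum Euler equations
`u^α ∂_α u̇^j + (c²/((1+c²)P))·Π^{jα} ∂_α Ṗ = (ϰ−2)ω·u̇^j + 𝔊^j` (j = 1,2,3), then
`u̇⁰ := −(1/u₀)·Σ_a u_a u̇^a` solves
`u^α ∂_α u̇⁰ + (c²/((1+c²)P))·Π^{0α} ∂_α Ṗ = 𝔊⁰` with
`𝔊⁰ = −Σ_a [u^α ∂_α(u_a/u₀)]·u̇^a − (ϰ−2)ω·(1/u₀)·Σ_a u_a u̇^a − (1/u₀)·Σ_a u_a 𝔊^a`. -/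
theorem stmt_16 (c κ : ℝ) (hc : c ≠ 0)
    (ω : (Fin 4 → ℝ) → ℝ)
    (g : (Fin 4 → ℝ) → Matrix (Fin 4) (Fin 4) ℝ)
    (hgdiff : ∀ μ ν : Fin 4, Differentiable ℝ fun x => g x μ ν)
    (hgsymm : ∀ x : Fin 4 → ℝ, (g x).IsSymm)
    (hginv : ∀ x : Fin 4 → ℝ, IsUnit (g x).det)
    (u : Fin 4 → (Fin 4 → ℝ) → ℝ)
    (hudiff : ∀ μ : Fin 4, Differentiable ℝ (u μ))
    (hnorm : ∀ x : Fin 4 → ℝ, ∑ α : Fin 4, ∑ β : Fin 4, g x α β * u α x * u β x = -1)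
    (ul : Fin 4 → (Fin 4 → ℝ) → ℝ)
    (hul : ∀ (μ : Fin 4) (x : Fin 4 → ℝ), ul μ x = ∑ α : Fin 4, g x μ α * u α x)
    (hu0 : ∀ x : Fin 4 → ℝ, ul 0 x ≠ 0)
    (P : (Fin 4 → ℝ) → ℝ) (hPdiff : Differentiable ℝ P)
    (hP : ∀ x : Fin 4 → ℝ, (1 + c ^ 2) * P x ≠ 0)
    (Proj : Fin 4 → Fin 4 → (Fin 4 → ℝ) → ℝ)
    (hProj : ∀ (μ ν : Fin 4) (x : Fin 4 → ℝ), Proj μ ν x = u μ x * u ν x + (g x)⁻¹ μ ν)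
    (Pdot : (Fin 4 → ℝ) → ℝ) (hPdot : Differentiable ℝ Pdot)
    (udot : Fin 3 → (Fin 4 → ℝ) → ℝ) (hudot : ∀ j : Fin 3, Differentiable ℝ (udot j))
    (G : Fin 3 → (Fin 4 → ℝ) → ℝ)
    (hEOV : ∀ (j : Fin 3) (x : Fin 4 → ℝ),
      (∑ α : Fin 4, u α x * pd α (udot j) x) +
          c ^ 2 / ((1 + c ^ 2) * P x) * ∑ α : Fin 4, Proj j.succ α x * pd α Pdot x =
        (κ - 2) * ω x * udot j x + G j x)
    (udot0 : (Fin 4 → ℝ) → ℝ)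
    (hudot0 : ∀ x : Fin 4 → ℝ,
      udot0 x = -(1 / ul 0 x) * ∑ a : Fin 3, ul a.succ x * udot a x) :
    ∀ x : Fin 4 → ℝ,
      (∑ α : Fin 4, u α x * pd α udot0 x) +
          c ^ 2 / ((1 + c ^ 2) * P x) * ∑ α : Fin 4, Proj 0 α x * pd α Pdot x =
        -(∑ a : Fin 3,
            (∑ α : Fin 4, u α x * pd α (fun y => ul a.succ y / ul 0 y) x) * udot a x) -
          (κ - 2) * ω x * (1 / ul 0 x) * (∑ a : Fin 3, ul a.succ x * udot a x) -
          (1 / ul 0 x) * ∑ a : Fin 3, ul a.succ x * G a x := by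
  intro x
  have hulD : ∀ μ, Differentiable ℝ (ul μ) := fun μ => by
    rw [funext (hul μ)]
    exact Differentiable.fun_sum fun α _ => (hgdiff μ α).mul (hudiff α)
  have hqD : ∀ a : Fin 3, Differentiable ℝ fun y => ul a.succ y / ul 0 y :=
    fun a => by
      simp only [div_eq_mul_inv]
      exact (hulD a.succ).mul ((hulD 0).inv hu0)
  have hudot0' : udot0 = fun y => -∑ a : Fin 3, ul a.succ y / ul 0 y * udot a y := by
    funext y
    rw [hudot0, neg_mul, Finset.mul_sum]
    congr 1
    exact Finset.sum_congr rfl fun a _ => by ring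
  have hpd : ∀ α, pd α udot0 x =
      -∑ a : Fin 3, (pd α (fun y => ul a.succ y / ul 0 y) x * udot a x +
        ul a.succ x / ul 0 x * pd α (udot a) x) := fun α => by
    rw [hudot0']
    exact pd_neg_sum_mul α (fun a y => ul a.succ y / ul 0 y) udot hqD hudot x
  have horth : ∀ ν, ∑ μ : Fin 4, ul μ x * Proj μ ν x = 0 := fun ν => by
    simp only [hul, hProj]
    exact sum_lower_mul_proj_eq_zero (g x) (hgsymm x) (hginv x) (fun μ => u μ x) (hnorm x) ν
  -- Solve the orthogonality relation for its time component.
  have hP0 : ∀ ν, Proj 0 ν x = -∑ a : Fin 3, ul a.succ x / ul 0 x * Proj a.succ ν x := fun ν => by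
    have h := horth ν
    rw [Fin.sum_univ_succ] at h
    have h' : ∑ a : Fin 3, ul a.succ x / ul 0 x * Proj a.succ ν x =
        (∑ a : Fin 3, ul a.succ x * Proj a.succ ν x) / ul 0 x := by
      rw [Finset.sum_div]
      exact Finset.sum_congr rfl fun a _ => by ring
    rw [h', ← neg_div, eq_div_iff (hu0 x)]
    linarith
  have e0 := hEOV 0 x
  have e1 := hEOV 1 x
  have e2 := hEOV 2 x
  simp only [hpd, hP0]
  generalize c ^ 2 / ((1 + c ^ 2) * P x) = k at *
  simp only [Fin.sum_univ_three, Fin.sum_univ_four] at e0 e1 e2 ⊢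
  linear_combination (-(ul (Fin.succ 0) x / ul 0 x)) * e0 - (ul (Fin.succ 1) x / ul 0 x) * e1 -
    (ul (Fin.succ 2) x / ul 0 x) * e2
end
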